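/- On the region R(3): uniformly on every compact subset K of the interior of R(3), ln|F_n(z)|/(2√n) → (1/3)·Re(√(Li₂(z³))) as n → ∞; that is, sup_{z ∈ K} | ln|F_n(z)|/(2√n) − (1/3)·Re(√(Li₂(z³))) | → 0. -/

import Mathlib

open Complex Filter

/-- `partsCount k n` is the number of partitions of `n` with exactly `k` parts. -/
noncomputable def partsCount (k n : ℕ) : ℕ := Nat.card {p : Nat.Partition n // p.parts.card = k}

/-- The partition polynomial `F_n(x) = ∑_{k=1}^n p_k(n) x^k`. -/
noncomputable def F (n : ℕ) (x : ℂ) : ℂ := ∑ k ∈ Finset.Icc 1 n, (partsCount k n : ℂ) * x ^ k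

/-- The dilogarithm `Li₂(z) = ∑_{n=1}^∞ zⁿ/n²`. -/
noncomputable def dilog (z : ℂ) : ℂ := ∑' n : ℕ, z ^ (n + 1) / ((n : ℂ) + 1) ^ 2

/-- `fk k x = (1/k)·Re √(Li₂(x^k))` with the principal branch square root. -/
noncomputable def fk (k : ℕ) (x : ℂ) : ℝ := (1 / (k : ℝ)) * ((dilog (x ^ k)) ^ (1 / 2 : ℂ)).re

/-- The region `R(1)`. -/
def R1 : Set ℂ := {x | ‖x‖ < 1 ∧ fk 2 x ≤ fk 1 x ∧ fk 3 x ≤ fk 1 x}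

/-- The region `R(2)`. -/
def R2 : Set ℂ := {x | ‖x‖ < 1 ∧ fk 1 x ≤ fk 2 x ∧ fk 3 x ≤ fk 2 x}

/-- The region `R(3)`. -/
def R3 : Set ℂ := {x | ‖x‖ < 1 ∧ fk 1 x ≤ fk 3 x ∧ fk 2 x ≤ fk 3 x}



/-! ### Part A: Cauchy coefficient formula -/

section PartA
open PowerSeries
open scoped PowerSeries.WithPiTopology

lemma F_eq_coeff (n : ℕ) (hn : 1 ≤ n) (x : ℂ) :
    F n x = (Nat.Partition.genFun (fun _ c => x ^ c)).coeff n := by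
  rw [Nat.Partition.coeff_genFun]
  have h1 : ∀ p : n.Partition, (p.parts.toFinsupp.prod fun _ c => x ^ c) = x ^ p.parts.card := by
    intro p
    rw [Finsupp.prod, Finset.prod_pow_eq_pow_sum]
    congr 1
    simp
  simp_rw [h1]
  have h2 : ∀ p ∈ (Finset.univ : Finset n.Partition), p.parts.card ∈ Finset.Icc 1 n := by
    intro p _
    rw [Finset.mem_Icc]
    constructor
    · rw [Nat.one_le_iff_ne_zero]
      intro h
      rw [Multiset.card_eq_zero] at h
      have := p.parts_sum
      rw [h] at this
      simp at this
      omega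
    · have := Multiset.card_nsmul_le_sum (s := p.parts) (a := 1) (fun y hy => p.parts_pos hy)
      rw [p.parts_sum] at this
      simpa using this
  rw [← Finset.sum_fiberwise_of_maps_to h2]
  unfold F
  refine Finset.sum_congr rfl fun k _ => ?_
  have h3 : ∑ p : n.Partition with p.parts.card = k, x ^ p.parts.card
      = ∑ p : n.Partition with p.parts.card = k, x ^ k := by
    refine Finset.sum_congr rfl fun p hp => ?_
    rw [(Finset.mem_filter.mp hp).2]
  rw [h3, Finset.sum_const, nsmul_eq_mul]
  congr 2
  unfold partsCount
  rw [Nat.card_eq_fintype_card, Fintype.card_subtype]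

noncomputable def fac (x : ℂ) (i : ℕ) : PowerSeries ℂ :=
  1 + ∑' j, x ^ (j + 1) • (X : PowerSeries ℂ) ^ ((i + 1) * (j + 1))

lemma coeff_fac_mul (x : ℂ) (i k : ℕ) : (fac x i).coeff ((i + 1) * k) = x ^ k := by
  have hs := Nat.Partition.summable_genFun_term (R := ℂ) (fun _ c => x ^ c) i
  rw [fac, map_add, hs.map_tsum _ (WithPiTopology.continuous_coeff _ _)]
  simp only [map_smul, coeff_X_pow, smul_eq_mul]
  rcases k with _ | k
  · simp
  · rw [tsum_eq_single k]
    · simp [coeff_one]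
    · intro b hb
      rw [if_neg, mul_zero]
      intro h
      have := Nat.eq_of_mul_eq_mul_left (by omega) h
      omega

lemma coeff_fac_ndvd (x : ℂ) (i d : ℕ) (hd : ¬ (i + 1) ∣ d) : (fac x i).coeff d = 0 := by
  have hs := Nat.Partition.summable_genFun_term (R := ℂ) (fun _ c => x ^ c) i
  rw [fac, map_add, hs.map_tsum _ (WithPiTopology.continuous_coeff _ _)]
  simp only [map_smul, coeff_X_pow, smul_eq_mul]
  have h0 : d ≠ 0 := by rintro rfl; simp at hd
  have : ∀ j, x ^ (j + 1) * (if d = (i + 1) * (j + 1) then (1:ℂ) else 0) = 0 := by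
    intro j
    rw [if_neg, mul_zero]
    rintro rfl
    exact hd (dvd_mul_right _ _)
  simp [this, coeff_one, h0]

/-- Absolutely summable at `q` with value `v`. -/
def EvAt (A : PowerSeries ℂ) (q v : ℂ) : Prop :=
  Summable (fun n => ‖A.coeff n * q ^ n‖) ∧ HasSum (fun n => A.coeff n * q ^ n) v

lemma EvAt.mul {A B : PowerSeries ℂ} {q a b : ℂ} (hA : EvAt A q a) (hB : EvAt B q b) :
    EvAt (A * B) q (a * b) := by
  have key : ∀ n, (A * B).coeff n * q ^ n =
      ∑ kl ∈ Finset.HasAntidiagonal.antidiagonal n, (A.coeff kl.1 * q ^ kl.1) * (B.coeff kl.2 * q ^ kl.2) := by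
    intro n
    rw [coeff_mul, Finset.sum_mul]
    refine Finset.sum_congr rfl fun p hp => ?_
    rw [← Finset.HasAntidiagonal.mem_antidiagonal.mp hp, pow_add]
    ring
  have hs := summable_norm_sum_mul_antidiagonal_of_summable_norm hA.1 hB.1
  have ht := tsum_mul_tsum_eq_tsum_sum_antidiagonal_of_summable_norm hA.1 hB.1
  simp_rw [← key] at hs ht
  refine ⟨hs, ?_⟩
  rw [hA.2.tsum_eq, hB.2.tsum_eq] at ht
  rw [ht]
  exact hs.of_norm.hasSum

lemma EvAt.one (q : ℂ) : EvAt 1 q 1 := by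
  have h : ∀ n, n ≠ 0 → (1 : PowerSeries ℂ).coeff n * q ^ n = 0 := by
    intro n hn; simp [coeff_one, hn]
  constructor
  · refine summable_of_ne_finset_zero (s := {0}) fun n hn => ?_
    rw [h n (by simpa using hn), norm_zero]
  · convert hasSum_single 0 h using 1
    simp

lemma EvAt_fac (x q : ℂ) (i : ℕ) (hx : ‖x‖ < 1) (hq : ‖q‖ < 1) :
    EvAt (fac x i) q (1 - x * q ^ (i + 1))⁻¹ := by
  have hinj : Function.Injective (fun k : ℕ => (i + 1) * k) := fun a b h =>
    Nat.eq_of_mul_eq_mul_left (by omega) h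
  have hn : ‖x * q ^ (i + 1)‖ < 1 := by
    rw [norm_mul, norm_pow]
    have : ‖q‖ ^ (i + 1) ≤ 1 := pow_le_one₀ (norm_nonneg _) hq.le
    nlinarith [norm_nonneg x, norm_nonneg q, pow_nonneg (norm_nonneg q) (i + 1)]
  have hz : ∀ d, d ∉ Set.range (fun k : ℕ => (i + 1) * k) → (fac x i).coeff d * q ^ d = 0 := by
    intro d hd
    rw [coeff_fac_ndvd, zero_mul]
    rintro ⟨k, rfl⟩
    exact hd ⟨k, rfl⟩
  have hc : ∀ k, (fac x i).coeff ((i + 1) * k) * q ^ ((i + 1) * k) = (x * q ^ (i + 1)) ^ k := by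
    intro k
    rw [coeff_fac_mul, mul_pow, pow_mul]
  constructor
  · rw [← hinj.summable_iff]
    · simp only [Function.comp_def, hc, norm_pow]
      exact summable_geometric_of_lt_one (norm_nonneg _) hn
    · intro d hd
      rw [hz d hd, norm_zero]
  · rw [← hinj.hasSum_iff hz]
    simp only [Function.comp_def, hc]
    exact hasSum_geometric_of_norm_lt_one hn

lemma EvAt_prod (x q : ℂ) (N : ℕ) (hx : ‖x‖ < 1) (hq : ‖q‖ < 1) :
    EvAt (∏ i ∈ Finset.range N, fac x i) q (∏ i ∈ Finset.range N, (1 - x * q ^ (i + 1))⁻¹) := by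
  induction N with
  | zero => simpa using EvAt.one q
  | succ N ih =>
    rw [Finset.prod_range_succ, Finset.prod_range_succ]
    exact ih.mul (EvAt_fac x q N hx hq)

lemma coeff_prod_tendsto (n : ℕ) (x : ℂ) (hn : 1 ≤ n) :
    Tendsto (fun N => (∏ i ∈ Finset.range N, fac x i).coeff n) atTop (nhds (F n x)) := by
  have h := (Nat.Partition.hasProd_genFun (R := ℂ) (fun _ c => x ^ c)).tendsto_prod_nat
  rw [F_eq_coeff n hn]
  exact (WithPiTopology.tendsto_iff_coeff_tendsto (R := ℂ) _ _ _).mp h n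

lemma integral_exp_int (m : ℤ) :
    ∫ φ in (-Real.pi)..Real.pi, cexp (((m : ℂ) * I) * (φ : ℂ)) = if m = 0 then 2 * Real.pi else 0 := by
  split_ifs with h
  · subst h
    simp
    ring
  · have hc : (m : ℂ) * I ≠ 0 := by
      simp [h]
    rw [integral_exp_mul_complex hc]
    have : cexp ((m : ℂ) * I * (Real.pi : ℝ)) = cexp ((m : ℂ) * I * ((-Real.pi : ℝ) : ℂ)) := by
      rw [Complex.exp_eq_exp_iff_exists_int]
      refine ⟨m, ?_⟩
      push_cast
      ring
    rw [this]
    simp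

/-- coefficient extraction for an absolutely convergent power series -/
lemma coeff_eq_integral (A : PowerSeries ℂ) (v : ℝ → ℂ) (σ : ℝ)
    (h : ∀ φ : ℝ, EvAt A (cexp (-(σ - φ * I))) (v φ)) (n : ℕ) :
    (2 * Real.pi) * A.coeff n = ∫ φ in (-Real.pi)..Real.pi, v φ * cexp (n * (σ - φ * I)) := by
  have hnorm : ∀ φ : ℝ, ‖cexp (-(σ - φ * I))‖ = Real.exp (-σ) := by
    intro φ; rw [Complex.norm_exp]; simp
  have hnorm2 : ∀ φ : ℝ, ‖cexp (n * (σ - φ * I))‖ = Real.exp (n * σ) := by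
    intro φ; rw [Complex.norm_exp]; simp
  have key := intervalIntegral.hasSum_integral_of_dominated_convergence
    (a := -Real.pi) (b := Real.pi) (μ := MeasureTheory.volume)
    (F := fun m (φ : ℝ) => A.coeff m * cexp (-(σ - φ * I)) ^ m * cexp (n * (σ - φ * I)))
    (f := fun φ => v φ * cexp (n * (σ - φ * I)))
    (fun m _ => ‖A.coeff m‖ * Real.exp (-σ) ^ m * Real.exp (n * σ))
    (fun m => by
      apply Continuous.aestronglyMeasurable
      fun_prop)
    (fun m => by
      refine Filter.Eventually.of_forall fun t _ => ?_
      rw [norm_mul, norm_mul, norm_pow, hnorm, hnorm2])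
    (by
      refine Filter.Eventually.of_forall fun t _ => ?_
      apply Summable.mul_right
      have := (h 0).1
      simpa [norm_mul, norm_pow, Complex.norm_exp] using this)
    (by simp)
    (by
      refine Filter.Eventually.of_forall fun t _ => ?_
      exact (h t).2.mul_right _)
  have hterm : ∀ m : ℕ, ∫ φ in (-Real.pi)..Real.pi,
      A.coeff m * cexp (-(σ - φ * I)) ^ m * cexp (n * (σ - φ * I))
      = if m = n then (2 * Real.pi) * A.coeff n else 0 := by
    intro m
    have h1 : ∀ φ : ℝ, A.coeff m * cexp (-(σ - φ * I)) ^ m * cexp (n * (σ - φ * I))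
        = (A.coeff m * cexp (((n : ℂ) - m) * σ)) * cexp ((((m - n : ℤ) : ℂ) * I) * φ) := by
      intro φ
      rw [← Complex.exp_nat_mul, mul_assoc, mul_assoc, ← Complex.exp_add, ← Complex.exp_add]
      congr 2
      push_cast
      ring
    simp_rw [h1]
    rw [intervalIntegral.integral_const_mul, integral_exp_int]
    by_cases hmn : m = n
    · subst hmn; simp; ring
    · have : (m : ℤ) - n ≠ 0 := by omega
      simp [hmn, this]
  simp only [hterm] at key
  have key2 := hasSum_ite_eq n ((2 * Real.pi : ℂ) * A.coeff n)
  exact key2.unique key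

noncomputable def Lg (x w : ℂ) : ℂ :=
  ∑' j : ℕ, x ^ (j + 1) / ((j : ℂ) + 1) * (cexp (((j : ℂ) + 1) * w) - 1)⁻¹

lemma hasSum_log (x q : ℂ) (hx : ‖x‖ < 1) (hq : ‖q‖ < 1) (i : ℕ) :
    HasSum (fun j : ℕ => (x * q ^ (i + 1)) ^ (j + 1) / ((j : ℂ) + 1)) (-Complex.log (1 - x * q ^ (i + 1))) := by
  have hn : ‖x * q ^ (i + 1)‖ < 1 := by
    rw [norm_mul, norm_pow]
    have : ‖q‖ ^ (i + 1) ≤ 1 := pow_le_one₀ (norm_nonneg _) hq.le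
    nlinarith [norm_nonneg x, norm_nonneg q, pow_nonneg (norm_nonneg q) (i + 1)]
  have := (hasSum_nat_add_iff' 1).mpr (Complex.hasSum_taylorSeries_neg_log hn)
  simpa using this

lemma norm_term_le (x q : ℂ) (hx : ‖x‖ < 1) (hq : ‖q‖ < 1) (i j : ℕ) :
    ‖(x * q ^ (i + 1)) ^ (j + 1) / ((j : ℂ) + 1)‖ ≤ ‖q‖ ^ i * ‖x‖ ^ j := by
  have h1 : (1 : ℝ) ≤ ‖(j : ℂ) + 1‖ := by
    have : ((j : ℂ) + 1) = ((j + 1 : ℝ) : ℂ) := by push_cast; rfl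
    rw [this, Complex.norm_real, Real.norm_of_nonneg (by positivity)]
    have := Nat.cast_nonneg (α := ℝ) j
    linarith
  rw [norm_div, norm_pow, norm_mul, norm_pow]
  refine (div_le_self (by positivity) h1).trans ?_
  rw [mul_pow, ← pow_mul, mul_comm]
  refine mul_le_mul ?_ ?_ (by positivity) (by positivity)
  · exact pow_le_pow_of_le_one (norm_nonneg _) hq.le (by nlinarith)
  · exact pow_le_pow_of_le_one (norm_nonneg _) hx.le (by omega)

lemma summable_double (x q : ℂ) (hx : ‖x‖ < 1) (hq : ‖q‖ < 1) :
    Summable (fun p : ℕ × ℕ => (x * q ^ (p.1 + 1)) ^ (p.2 + 1) / ((p.2 : ℂ) + 1)) := by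
  refine Summable.of_norm_bounded (g := fun p : ℕ × ℕ => ‖q‖ ^ p.1 * ‖x‖ ^ p.2) ?_ ?_
  · exact Summable.mul_of_nonneg (summable_geometric_of_lt_one (norm_nonneg _) hq)
      (summable_geometric_of_lt_one (norm_nonneg _) hx) (fun _ => by positivity) (fun _ => by positivity)
  · intro p
    exact norm_term_le x q hx hq p.1 p.2

lemma norm_exp_neg_lt {w : ℂ} (hw : 0 < w.re) : ‖cexp (-w)‖ < 1 := by
  rw [Complex.norm_exp]; simp [hw]

lemma hasSum_Lg (x w : ℂ) (hx : ‖x‖ < 1) (hw : 0 < w.re) :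
    HasSum (fun i : ℕ => -Complex.log (1 - x * cexp (-w) ^ (i + 1))) (Lg x w) := by
  have hq := norm_exp_neg_lt hw
  have hs := summable_double x (cexp (-w)) hx hq
  have h1 := hs.hasSum.prod_fiberwise (fun i => hasSum_log x (cexp (-w)) hx hq i)
  convert h1 using 1
  have h2 : ∀ j : ℕ, HasSum (fun i : ℕ => (x * cexp (-w) ^ (i + 1)) ^ (j + 1) / ((j : ℂ) + 1))
      (x ^ (j + 1) / ((j : ℂ) + 1) * (cexp (((j : ℂ) + 1) * w) - 1)⁻¹) := by
    intro j
    have hqj : ‖cexp (-w) ^ (j + 1)‖ < 1 := by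
      rw [norm_pow]; exact pow_lt_one₀ (norm_nonneg _) hq (by omega)
    have h3 := ((hasSum_geometric_of_norm_lt_one hqj).mul_left (cexp (-w) ^ (j + 1))).mul_left
      (x ^ (j + 1) / ((j : ℂ) + 1))
    have e1 : (fun i : ℕ => (x * cexp (-w) ^ (i + 1)) ^ (j + 1) / ((j : ℂ) + 1)) =
        fun i => x ^ (j + 1) / ((j : ℂ) + 1) * (cexp (-w) ^ (j + 1) * (cexp (-w) ^ (j + 1)) ^ i) := by
      funext i
      rw [mul_pow, ← pow_mul, ← pow_mul, ← pow_add]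
      rw [show (i + 1) * (j + 1) = j + 1 + (j + 1) * i by ring]
      ring
    have e2 : (cexp (((j : ℂ) + 1) * w) - 1)⁻¹ =
        cexp (-w) ^ (j + 1) * (1 - cexp (-w) ^ (j + 1))⁻¹ := by
      have h4 : cexp (((j : ℂ) + 1) * w) = (cexp (-w) ^ (j + 1))⁻¹ := by
        rw [← Complex.exp_nat_mul, ← Complex.exp_neg]
        congr 1
        push_cast
        ring
      have h5 : cexp (-w) ^ (j + 1) ≠ 0 := pow_ne_zero _ (Complex.exp_ne_zero _)
      rw [h4]
      have h6 : 1 - cexp (-w) ^ (j + 1) ≠ 0 := by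
        intro h
        rw [← sub_eq_zero.mp h] at hqj
        simp at hqj
      generalize cexp (-w) ^ (j + 1) = y at *
      rw [show y⁻¹ - 1 = y⁻¹ * (1 - y) by field_simp, mul_inv, inv_inv]
    rw [e1, e2]
    exact h3
  have h7 := hs.prod_symm.hasSum.prod_fiberwise h2
  have h8 := (Equiv.prodComm ℕ ℕ).tsum_eq
    (fun p : ℕ × ℕ => (x * cexp (-w) ^ (p.1 + 1)) ^ (p.2 + 1) / ((p.2 : ℂ) + 1))
  rw [← h8]
  exact h7.tsum_eq

lemma norm_log_le (x q : ℂ) (hx : ‖x‖ < 1) (hq : ‖q‖ < 1) (i : ℕ) :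
    ‖-Complex.log (1 - x * q ^ (i + 1))‖ ≤ ‖q‖ ^ i * (1 - ‖x‖)⁻¹ := by
  rw [← (hasSum_log x q hx hq i).tsum_eq]
  exact tsum_of_norm_bounded ((hasSum_geometric_of_lt_one (norm_nonneg _) hx).mul_left _)
    (fun j => norm_term_le x q hx hq i j)

theorem F_eq_integral (n : ℕ) (hn : 1 ≤ n) (x : ℂ) (hx : ‖x‖ < 1) (σ : ℝ) (hσ : 0 < σ) :
    (2 * Real.pi) * F n x =
      ∫ φ in (-Real.pi)..Real.pi, cexp (Lg x (σ - φ * I) + n * (σ - φ * I)) := by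
  have hre : ∀ φ : ℝ, 0 < ((σ : ℂ) - φ * I).re := by intro φ; simpa using hσ
  have hne : ∀ (φ : ℝ) (i : ℕ), 1 - x * cexp (-((σ : ℂ) - φ * I)) ^ (i + 1) ≠ 0 := by
    intro φ i h
    have h1 := norm_exp_neg_lt (hre φ)
    have h2 : ‖x * cexp (-((σ : ℂ) - φ * I)) ^ (i + 1)‖ < 1 := by
      rw [norm_mul, norm_pow]
      have := pow_le_one₀ (n := i + 1) (norm_nonneg _) h1.le
      nlinarith [norm_nonneg x, pow_nonneg (norm_nonneg (cexp (-((σ : ℂ) - φ * I)))) (i + 1)]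
    rw [← sub_eq_zero.mp h] at h2
    simp at h2
  have hprod : ∀ (φ : ℝ) (N : ℕ), ∏ i ∈ Finset.range N, (1 - x * cexp (-((σ : ℂ) - φ * I)) ^ (i + 1))⁻¹
      = cexp (∑ i ∈ Finset.range N, -Complex.log (1 - x * cexp (-((σ : ℂ) - φ * I)) ^ (i + 1))) := by
    intro φ N
    rw [Complex.exp_sum]
    refine Finset.prod_congr rfl fun i _ => ?_
    rw [Complex.exp_neg (Complex.log _), Complex.exp_log (hne φ i)]
  have h1 : ∀ N, (2 * Real.pi) * (∏ i ∈ Finset.range N, fac x i).coeff n =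
      ∫ φ in (-Real.pi)..Real.pi,
        (∏ i ∈ Finset.range N, (1 - x * cexp (-((σ : ℂ) - φ * I)) ^ (i + 1))⁻¹)
          * cexp (n * (σ - φ * I)) := fun N =>
    coeff_eq_integral _ _ σ (fun φ => EvAt_prod x _ N hx (norm_exp_neg_lt (hre φ))) n
  have h2 := (coeff_prod_tendsto n x hn).const_mul (2 * Real.pi : ℂ)
  simp only [h1] at h2
  refine tendsto_nhds_unique h2 ?_
  set B : ℝ := Real.exp ((1 - Real.exp (-σ))⁻¹ * (1 - ‖x‖)⁻¹) * Real.exp (n * σ) with hB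
  have hqn : ∀ φ : ℝ, ‖cexp (-((σ : ℂ) - φ * I))‖ = Real.exp (-σ) := by
    intro φ; rw [Complex.norm_exp]; simp
  refine intervalIntegral.tendsto_integral_filter_of_dominated_convergence (fun _ => B) ?_ ?_ ?_ ?_
  · refine Filter.Eventually.of_forall fun N => ?_
    apply Continuous.aestronglyMeasurable
    refine Continuous.mul ?_ (by fun_prop)
    refine continuous_finsetProd _ fun i _ => ?_
    exact Continuous.inv₀ (by fun_prop) (fun φ => hne φ i)
  · refine Filter.Eventually.of_forall fun N => Filter.Eventually.of_forall fun φ _ => ?_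
    rw [hprod, norm_mul, hB]
    refine mul_le_mul ?_ ?_ (norm_nonneg _) (Real.exp_pos _).le
    · refine (Complex.norm_exp_le_exp_norm _).trans (Real.exp_le_exp.mpr ?_)
      have he : Real.exp (-σ) < 1 := by simpa using hσ
      have hg := (hasSum_geometric_of_lt_one (Real.exp_pos (-σ)).le he).mul_right ((1 - ‖x‖)⁻¹)
      refine (norm_sum_le _ _).trans (le_trans (Finset.sum_le_sum fun i _ => ?_)
        (sum_le_hasSum (Finset.range N) (fun i _ => ?_) hg))
      · have := norm_log_le x _ hx (norm_exp_neg_lt (hre φ)) i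
        rwa [hqn] at this
      · have : 0 < 1 - ‖x‖ := by linarith
        have := (Real.exp_pos (-σ)).le
        positivity
    · rw [Complex.norm_exp]; simp
  · simp
  · refine Filter.Eventually.of_forall fun φ _ => ?_
    simp only [hprod, Complex.exp_add]
    refine Tendsto.mul_const _ ?_
    exact (Complex.continuous_exp.tendsto _).comp (hasSum_Lg x _ hx (hre φ)).tendsto_sum_nat

end PartA


/-! ### Part B: limits of `σ * Lg` along the circle -/

section PartB
open Topology

lemma fk_eq (k : ℕ) (x : ℂ) :
    fk k x = (1 / (k : ℝ)) * Real.sqrt ((‖dilog (x ^ k)‖ + (dilog (x ^ k)).re) / 2) := by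
  unfold fk
  rw [one_div (2 : ℂ), Complex.cpow_inv_two_re]

lemma fk_nonneg (k : ℕ) (x : ℂ) : 0 ≤ fk k x := by
  rw [fk_eq]; positivity

lemma fk_sq (k : ℕ) (x : ℂ) :
    fk k x ^ 2 = (‖dilog (x ^ k)‖ + (dilog (x ^ k)).re) / 2 / (k : ℝ) ^ 2 := by
  rw [fk_eq, mul_pow, Real.sq_sqrt]
  · ring
  · have := Complex.abs_re_le_norm (dilog (x ^ k))
    have := neg_abs_le (dilog (x ^ k)).re
    linarith

lemma re_mul_circle (ν L : ℂ) (h : ‖ν - 1 / 2‖ = 1 / 2) : (ν * L).re ≤ (‖L‖ + L.re) / 2 := by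
  have h1 : ν * L = (ν - 1 / 2) * L + (1 / 2 : ℝ) * L := by push_cast; ring
  have h2 : ((ν - 1 / 2) * L).re ≤ 1 / 2 * ‖L‖ := by
    rw [← h, ← norm_mul]; exact Complex.re_le_norm _
  rw [h1, Complex.add_re, Complex.re_ofReal_mul]
  linarith

lemma norm_cast_succ (j : ℕ) : ‖(j : ℂ) + 1‖ = (j : ℝ) + 1 := by
  have : ((j : ℂ) + 1) = ((j + 1 : ℝ) : ℂ) := by push_cast; rfl
  rw [this, Complex.norm_real, Real.norm_of_nonneg (by positivity)]

lemma cast_succ_ne (j : ℕ) : (j : ℂ) + 1 ≠ 0 := by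
  rw [← norm_ne_zero_iff, norm_cast_succ]; positivity

lemma norm_exp_sub_one_ge (z : ℂ) (u : ℂ) (hu : ‖u‖ = 1) : z.re ≤ ‖u * cexp z - 1‖ := by
  have h1 := norm_sub_norm_le (u * cexp z) 1
  rw [norm_mul, hu, one_mul, Complex.norm_exp, norm_one] at h1
  have := Real.add_one_le_exp z.re
  linarith

lemma norm_term_bound (x : ℂ) (σ φ : ℝ) (hσ : 0 < σ) (j : ℕ) :
    ‖(σ : ℂ) * (x ^ (j + 1) / ((j : ℂ) + 1) * (cexp (((j : ℂ) + 1) * (σ - φ * I)) - 1)⁻¹)‖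
      ≤ ‖x‖ ^ (j + 1) := by
  have h1 : ((j : ℝ) + 1) * σ ≤ ‖cexp (((j : ℂ) + 1) * (σ - φ * I)) - 1‖ := by
    have := norm_exp_sub_one_ge (((j : ℂ) + 1) * (σ - φ * I)) 1 (by simp)
    rw [one_mul] at this
    refine le_trans (le_of_eq ?_) this
    simp
  have hj : (1 : ℝ) ≤ (j : ℝ) + 1 := by linarith [Nat.cast_nonneg (α := ℝ) j]
  rw [norm_mul, norm_mul, norm_div, norm_inv, norm_pow, norm_cast_succ, Complex.norm_real,
    Real.norm_of_nonneg hσ.le]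
  calc σ * (‖x‖ ^ (j + 1) / (j + 1) * ‖cexp (((j : ℂ) + 1) * (σ - φ * I)) - 1‖⁻¹)
      ≤ σ * (‖x‖ ^ (j + 1) / 1 * (1 * σ)⁻¹) := by
        gcongr
        exact le_trans (by nlinarith) h1
    _ = ‖x‖ ^ (j + 1) := by field_simp

lemma tendsto_div_exp_sub_one : Tendsto (fun z : ℂ => z * (cexp z - 1)⁻¹) (𝓝[≠] 0) (𝓝 1) := by
  have h := (Complex.hasDerivAt_exp 0).tendsto_slope
  have h2 := h.inv₀ (by simp)
  simp only [Complex.exp_zero, inv_one] at h2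
  refine h2.congr fun z => ?_
  rw [slope_def_field]
  simp [div_eq_mul_inv]

lemma norm_half_circle (σ δ : ℝ) (hσ : 0 < σ) : ‖(σ : ℂ) / (σ - δ * I) - 1 / 2‖ = 1 / 2 := by
  have hne : (σ : ℂ) - δ * I ≠ 0 := by
    intro h
    have := congrArg Complex.re h
    simp at this
    linarith
  have h1 : (σ : ℂ) / (σ - δ * I) - 1 / 2 = (1 / 2) * ((σ + δ * I) / (σ - δ * I)) := by
    field_simp; ring
  have h2 : ‖(σ : ℂ) + δ * I‖ = ‖(σ : ℂ) - δ * I‖ := by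
    have : (σ : ℂ) - δ * I = (starRingEnd ℂ) (σ + δ * I) := by simp [sub_eq_add_neg]
    rw [this, Complex.norm_conj]
  rw [h1, norm_mul, norm_div (_ + _), h2, div_self (by simpa using hne)]
  simp

/-- the basic filter -/
noncomputable abbrev filt (x₀ : ℂ) (φ₀ : ℝ) : Filter (ℝ × ℂ × ℝ) := 𝓝[>] 0 ×ˢ 𝓝 x₀ ×ˢ 𝓝 φ₀

lemma filt_facts {x₀ : ℂ} {φ₀ : ℝ} {g : Filter (ℝ × ℂ × ℝ)} (hg : g ≤ filt x₀ φ₀) :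
    (∀ᶠ p in g, 0 < p.1) ∧ Tendsto (fun p => p.1) g (𝓝 0) ∧ Tendsto (fun p => p.2.1) g (𝓝 x₀) ∧
      Tendsto (fun p => p.2.2) g (𝓝 φ₀) := by
  have h1 : Tendsto (fun p : ℝ × ℂ × ℝ => p.1) g (𝓝[>] 0) := tendsto_fst.mono_left hg
  have h2 : Tendsto (fun p : ℝ × ℂ × ℝ => p.2) g (𝓝 x₀ ×ˢ 𝓝 φ₀) := tendsto_snd.mono_left hg
  exact ⟨h1.eventually self_mem_nhdsWithin, h1.mono_right nhdsWithin_le_nhds,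
    tendsto_fst.comp h2, tendsto_snd.comp h2⟩

lemma lim_of_terms {x₀ : ℂ} {φ₀ : ℝ} (hx₀ : ‖x₀‖ < 1) {g : Filter (ℝ × ℂ × ℝ)}
    (hg : g ≤ filt x₀ φ₀) (a : ℕ → ℂ)
    (ha : ∀ j : ℕ, Tendsto (fun p : ℝ × ℂ × ℝ =>
      (p.1 : ℂ) * (cexp (((j : ℂ) + 1) * (p.1 - p.2.2 * I)) - 1)⁻¹) g (𝓝 (a j))) :
    Tendsto (fun p : ℝ × ℂ × ℝ => (p.1 : ℂ) * Lg p.2.1 (p.1 - p.2.2 * I)) g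
      (𝓝 (∑' j : ℕ, x₀ ^ (j + 1) / ((j : ℂ) + 1) * a j)) := by
  obtain ⟨h1, h2, h3, h4⟩ := filt_facts hg
  obtain ⟨ρ, hρ1, hρ2⟩ := exists_between hx₀
  have h5 : ∀ᶠ p in g, ‖p.2.1‖ < ρ := h3.norm.eventually (gt_mem_nhds hρ1)
  have hρ0 : 0 ≤ ρ := (norm_nonneg _).trans hρ1.le
  simp only [Lg, ← tsum_mul_left]
  refine tendsto_tsum_of_dominated_convergence (bound := fun j => ρ ^ (j + 1)) ?_ ?_ ?_
  · exact (summable_nat_add_iff 1).mpr (summable_geometric_of_lt_one hρ0 hρ2)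
  · intro j
    have := ((h3.pow (j + 1)).div_const ((j : ℂ) + 1)).mul (ha j)
    refine this.congr fun p => ?_
    ring
  · filter_upwards [h1, h5] with p hp1 hp5 j
    exact (norm_term_bound _ _ _ hp1 j).trans (pow_le_pow_left₀ (norm_nonneg _) hp5.le _)

lemma term_lim_zero {x₀ : ℂ} {φ₀ : ℝ} {g : Filter (ℝ × ℂ × ℝ)}
    (hg : g ≤ filt x₀ φ₀) (j : ℕ) (hj : cexp (φ₀ * I) ^ (j + 1) ≠ 1) :
    Tendsto (fun p : ℝ × ℂ × ℝ =>
      (p.1 : ℂ) * (cexp (((j : ℂ) + 1) * (p.1 - p.2.2 * I)) - 1)⁻¹) g (𝓝 0) := by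
  obtain ⟨h1, h2, h3, h4⟩ := filt_facts hg
  have h2' : Tendsto (fun p : ℝ × ℂ × ℝ => (p.1 : ℂ)) g (𝓝 ((0 : ℝ) : ℂ)) :=
    (Complex.continuous_ofReal.tendsto _).comp h2
  have h4' : Tendsto (fun p : ℝ × ℂ × ℝ => (p.2.2 : ℂ)) g (𝓝 (φ₀ : ℂ)) :=
    (Complex.continuous_ofReal.tendsto _).comp h4
  have h5 : Tendsto (fun p : ℝ × ℂ × ℝ => cexp (((j : ℂ) + 1) * (p.1 - p.2.2 * I)) - 1) g
      (𝓝 (cexp (((j : ℂ) + 1) * ((0 : ℝ) - φ₀ * I)) - 1)) :=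
    ((Complex.continuous_exp.tendsto _).comp
      ((h2'.sub (h4'.mul_const I)).const_mul ((j : ℂ) + 1))).sub_const 1
  have hne : cexp (((j : ℂ) + 1) * ((0 : ℝ) - φ₀ * I)) - 1 ≠ 0 := by
    intro h
    apply hj
    have h6 : cexp (((j : ℂ) + 1) * ((0 : ℝ) - φ₀ * I)) = (cexp (φ₀ * I) ^ (j + 1))⁻¹ := by
      rw [← Complex.exp_nat_mul, ← Complex.exp_neg]
      congr 1
      push_cast
      ring
    rw [h6, sub_eq_zero, inv_eq_one] at h
    exact h
  have := h2'.mul (h5.inv₀ hne)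
  simpa using this

lemma term_lim_nu {x₀ : ℂ} {φ₀ : ℝ} {g : Filter (ℝ × ℂ × ℝ)}
    (hg : g ≤ filt x₀ φ₀) (j : ℕ) (hj : cexp (φ₀ * I) ^ (j + 1) = 1) (ν : ℂ)
    (hν : Tendsto (fun p : ℝ × ℂ × ℝ => (p.1 : ℂ) / (p.1 - ((p.2.2 - φ₀ : ℝ) : ℂ) * I)) g (𝓝 ν)) :
    Tendsto (fun p : ℝ × ℂ × ℝ =>
      (p.1 : ℂ) * (cexp (((j : ℂ) + 1) * (p.1 - p.2.2 * I)) - 1)⁻¹) g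
      (𝓝 (ν / ((j : ℂ) + 1))) := by
  obtain ⟨h1, h2, h3, h4⟩ := filt_facts hg
  have h2' : Tendsto (fun p : ℝ × ℂ × ℝ => (p.1 : ℂ)) g (𝓝 ((0 : ℝ) : ℂ)) :=
    (Complex.continuous_ofReal.tendsto _).comp h2
  have h4' : Tendsto (fun p : ℝ × ℂ × ℝ => ((p.2.2 - φ₀ : ℝ) : ℂ)) g (𝓝 ((φ₀ - φ₀ : ℝ) : ℂ)) :=
    (Complex.continuous_ofReal.tendsto _).comp (h4.sub_const φ₀)
  have h5 : Tendsto (fun p : ℝ × ℂ × ℝ => ((j : ℂ) + 1) * (p.1 - ((p.2.2 - φ₀ : ℝ) : ℂ) * I)) g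
      (𝓝[≠] 0) := by
    refine tendsto_nhdsWithin_iff.mpr ⟨?_, ?_⟩
    · have := (h2'.sub (h4'.mul_const I)).const_mul ((j : ℂ) + 1)
      simpa using this
    · filter_upwards [h1] with p hp h
      have := congrArg Complex.re h
      simp at this
      rcases this with h | h
      · have := Nat.cast_nonneg (α := ℝ) j
        linarith
      · linarith
  have h6 := (hν.div_const ((j : ℂ) + 1)).mul (tendsto_div_exp_sub_one.comp h5)
  rw [mul_one] at h6
  refine h6.congr' ?_
  filter_upwards [h1] with p hp
  have hne : (p.1 : ℂ) - ((p.2.2 - φ₀ : ℝ) : ℂ) * I ≠ 0 := by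
    intro h
    have := congrArg Complex.re h
    simp at this
    linarith
  have he : cexp (((j : ℂ) + 1) * (p.1 - p.2.2 * I)) =
      cexp (((j : ℂ) + 1) * (p.1 - ((p.2.2 - φ₀ : ℝ) : ℂ) * I)) := by
    have : cexp (((j : ℂ) + 1) * (p.1 - ((p.2.2 - φ₀ : ℝ) : ℂ) * I)) =
        cexp (((j : ℂ) + 1) * (p.1 - p.2.2 * I)) * cexp (φ₀ * I) ^ (j + 1) := by
      rw [← Complex.exp_nat_mul, ← Complex.exp_add]
      congr 1
      push_cast
      ring
    rw [this, hj, mul_one]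
  have hj1 := cast_succ_ne j
  simp only [Function.comp_def]
  rw [he]
  field_simp

lemma tsum_dvd (x ν : ℂ) (k : ℕ) (hk : 0 < k) :
    ∑' j : ℕ, x ^ (j + 1) / ((j : ℂ) + 1) * (if k ∣ j + 1 then ν / ((j : ℂ) + 1) else 0)
      = ν * (dilog (x ^ k) / (k : ℂ) ^ 2) := by
  have hk' : (k : ℂ) ≠ 0 := by exact_mod_cast hk.ne'
  have hinj : Function.Injective (fun m : ℕ => k * (m + 1) - 1) := by
    intro a b h
    simp only at h
    have h1 : 1 ≤ k * (a + 1) := Nat.mul_pos hk (by omega)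
    have h2 : 1 ≤ k * (b + 1) := Nat.mul_pos hk (by omega)
    have := Nat.eq_of_mul_eq_mul_left hk (by omega : k * (a + 1) = k * (b + 1))
    omega
  have hsupp : Function.support (fun j : ℕ =>
      x ^ (j + 1) / ((j : ℂ) + 1) * (if k ∣ j + 1 then ν / ((j : ℂ) + 1) else 0)) ⊆
      Set.range (fun m : ℕ => k * (m + 1) - 1) := by
    intro j hj
    by_cases hd : k ∣ j + 1
    · obtain ⟨c, hc⟩ := hd
      have : c ≠ 0 := by rintro rfl; simp at hc
      refine ⟨c - 1, ?_⟩
      simp only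
      rw [Nat.sub_add_cancel (by omega), ← hc]
      omega
    · simp [hd] at hj
  rw [← hinj.tsum_eq hsupp, dilog, ← tsum_div_const, ← tsum_mul_left]
  refine tsum_congr fun m => ?_
  have h1 : 1 ≤ k * (m + 1) := Nat.mul_pos hk (by omega)
  have h2 : k * (m + 1) - 1 + 1 = k * (m + 1) := by omega
  have h3 : ((k * (m + 1) - 1 : ℕ) : ℂ) + 1 = k * ((m : ℂ) + 1) := by
    rw [← Nat.cast_add_one, h2]; push_cast; ring
  rw [h2, h3, if_pos (dvd_mul_right _ _), ← pow_mul]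
  have := cast_succ_ne m
  field_simp

lemma gap_infinite {x₀ : ℂ} {φ₀ : ℝ} (hx₀ : ‖x₀‖ < 1) (h : ∀ j : ℕ, cexp (φ₀ * I) ^ (j + 1) ≠ 1) :
    Tendsto (fun p : ℝ × ℂ × ℝ => (p.1 : ℂ) * Lg p.2.1 (p.1 - p.2.2 * I)) (filt x₀ φ₀) (𝓝 0) := by
  have := lim_of_terms hx₀ (le_refl (filt x₀ φ₀)) (fun _ => 0) (fun j => term_lim_zero le_rfl j (h j))
  simpa using this

lemma gap_ultra {x₀ : ℂ} {φ₀ : ℝ} (hx₀ : ‖x₀‖ < 1) (k : ℕ) (hk : orderOf (cexp (φ₀ * I)) = k)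
    (hk0 : 0 < k) (g : Ultrafilter (ℝ × ℂ × ℝ)) (hg : (g : Filter _) ≤ filt x₀ φ₀) :
    ∃ ν : ℂ, ‖ν - 1 / 2‖ = 1 / 2 ∧
      Tendsto (fun p : ℝ × ℂ × ℝ => (p.1 : ℂ) / (p.1 - ((p.2.2 - φ₀ : ℝ) : ℂ) * I)) g (𝓝 ν) ∧
      Tendsto (fun p : ℝ × ℂ × ℝ => (p.1 : ℂ) * Lg p.2.1 (p.1 - p.2.2 * I)) g
        (𝓝 (ν * (dilog (x₀ ^ k) / (k : ℂ) ^ 2))) := by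
  obtain ⟨h1, h2, h3, h4⟩ := filt_facts hg
  have hc : IsCompact (Metric.sphere (1 / 2 : ℂ) (1 / 2)) := isCompact_sphere _ _
  obtain ⟨ν, hν1, hν2⟩ := hc.ultrafilter_le_nhds'
    (g.map (fun p : ℝ × ℂ × ℝ => (p.1 : ℂ) / (p.1 - ((p.2.2 - φ₀ : ℝ) : ℂ) * I))) (by
      rw [Ultrafilter.mem_map]
      filter_upwards [h1] with p hp
      rw [Set.mem_preimage, mem_sphere_iff_norm]
      exact norm_half_circle _ _ hp)
  rw [mem_sphere_iff_norm] at hν1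
  refine ⟨ν, hν1, hν2, ?_⟩
  rw [← tsum_dvd x₀ ν k hk0]
  refine lim_of_terms hx₀ hg _ fun j => ?_
  split_ifs with hd
  · exact term_lim_nu hg j (orderOf_dvd_iff_pow_eq_one.mp (hk ▸ hd)) ν hν2
  · exact term_lim_zero hg j (fun h => hd (hk ▸ orderOf_dvd_iff_pow_eq_one.mpr h))

/-- Local gap away from order three. -/
lemma gap_local {x₀ : ℂ} {φ₀ : ℝ} (hx₀ : ‖x₀‖ < 1) (M : ℝ) (hM0 : 0 < M)
    (hM : 0 < orderOf (cexp (φ₀ * I)) → fk (orderOf (cexp (φ₀ * I))) x₀ ^ 2 < M) :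
    ∀ᶠ p in filt x₀ φ₀, ((p.1 : ℂ) * Lg p.2.1 (p.1 - p.2.2 * I)).re < M := by
  rcases Nat.eq_zero_or_pos (orderOf (cexp (φ₀ * I))) with h0 | hpos
  · have h : ∀ j : ℕ, cexp (φ₀ * I) ^ (j + 1) ≠ 1 := by
      intro j hj
      have := orderOf_dvd_of_pow_eq_one hj
      rw [h0] at this
      simp at this
    have := (Complex.continuous_re.tendsto _).comp (gap_infinite hx₀ h)
    exact this.eventually (gt_mem_nhds (by simpa using hM0))
  · refine Filter.mem_iff_ultrafilter.mpr fun g hg => ?_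
    obtain ⟨ν, hν, -, hlim⟩ := gap_ultra hx₀ _ rfl hpos g hg
    have h2 := (Complex.continuous_re.tendsto _).comp hlim
    refine h2.eventually (gt_mem_nhds (lt_of_le_of_lt ?_ (hM hpos)))
    rw [fk_sq]
    generalize orderOf (cexp (φ₀ * I)) = k at *
    have h3 := re_mul_circle ν (dilog (x₀ ^ k)) hν
    have h4 : ν * (dilog (x₀ ^ k) / (k : ℂ) ^ 2) = ν * dilog (x₀ ^ k) / (((k : ℝ) ^ 2 : ℝ) : ℂ) := by
      push_cast; ring
    rw [h4, Complex.div_ofReal_re]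
    gcongr

/-- Local gap at order three, outside of the window. -/
lemma gap_window {x₀ : ℂ} {φ₀ : ℝ} (hx₀ : ‖x₀‖ < 1) (M B : ℝ) (hB : 0 < B)
    (h3 : orderOf (cexp (φ₀ * I)) = 3) (hM : ‖dilog (x₀ ^ 3)‖ / 9 / B < M) :
    ∀ᶠ p in filt x₀ φ₀, B * p.1 ≤ |p.2.2 - φ₀| →
      ((p.1 : ℂ) * Lg p.2.1 (p.1 - p.2.2 * I)).re < M := by
  refine Filter.mem_iff_ultrafilter.mpr fun g hg => ?_
  obtain ⟨ν, hν, hνlim, hlim⟩ := gap_ultra hx₀ 3 h3 (by norm_num) g hg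
  obtain ⟨h1, -, -, -⟩ := filt_facts hg
  rcases g.em (fun p => B * p.1 ≤ |p.2.2 - φ₀|) with hw | hw
  · have hνB : ‖ν‖ ≤ 1 / B := by
      refine le_of_tendsto hνlim.norm ?_
      filter_upwards [h1, hw] with p hp1 hp2
      rw [norm_div, Complex.norm_real, Real.norm_of_nonneg hp1.le]
      have h5 : |p.2.2 - φ₀| ≤ ‖(p.1 : ℂ) - ((p.2.2 - φ₀ : ℝ) : ℂ) * I‖ := by
        have := Complex.abs_im_le_norm ((p.1 : ℂ) - ((p.2.2 - φ₀ : ℝ) : ℂ) * I)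
        refine le_trans (le_of_eq ?_) this
        simp [abs_sub_comm]
      have h6 : 0 < ‖(p.1 : ℂ) - ((p.2.2 - φ₀ : ℝ) : ℂ) * I‖ :=
        lt_of_lt_of_le (by positivity) (hp2.trans h5)
      rw [div_le_div_iff₀ h6 hB]
      linarith
    have h2 := (Complex.continuous_re.tendsto _).comp hlim
    refine (h2.eventually (gt_mem_nhds (lt_of_le_of_lt ?_ hM))).mono fun p hp _ => hp
    refine (Complex.re_le_norm _).trans ?_
    rw [norm_mul, norm_div, norm_pow, Complex.norm_natCast]
    calc ‖ν‖ * (‖dilog (x₀ ^ 3)‖ / ((3 : ℕ) : ℝ) ^ 2) ≤ 1 / B * (‖dilog (x₀ ^ 3)‖ / ((3 : ℕ) : ℝ) ^ 2) := by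
          gcongr
      _ = ‖dilog (x₀ ^ 3)‖ / 9 / B := by norm_num; ring
  · exact hw.mono fun p hp h => absurd h hp

end PartB


/-! ### Part C: global gap -/

section PartC
open Topology

lemma orderOf_three {φ : ℝ} (hφ : φ ∈ Set.Icc (-Real.pi) Real.pi)
    (h : orderOf (cexp (φ * I)) = 3) : φ = 2 * Real.pi / 3 ∨ φ = -(2 * Real.pi / 3) := by
  have h1 : cexp (φ * I) ^ 3 = 1 := by rw [← h]; exact pow_orderOf_eq_one _
  rw [← Complex.exp_nat_mul, Complex.exp_eq_one_iff] at h1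
  obtain ⟨m, hm⟩ := h1
  have h2 : (3 : ℝ) * φ = m * (2 * Real.pi) := by
    have := congrArg Complex.im hm
    simpa using this
  have hp := Real.pi_pos
  have hm1 : m ≤ 1 := by
    by_contra hc
    have : (2 : ℝ) ≤ m := by exact_mod_cast (by omega : (2 : ℤ) ≤ m)
    nlinarith [hφ.2]
  have hm2 : -1 ≤ m := by
    by_contra hc
    have : (m : ℝ) ≤ -2 := by exact_mod_cast (by omega : m ≤ (-2 : ℤ))
    nlinarith [hφ.1]
  have hm3 : m ≠ 0 := by
    rintro rfl
    have : φ = 0 := by simpa using h2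
    rw [this] at h
    simp at h
  obtain rfl | rfl : m = 1 ∨ m = -1 := by omega
  · left; push_cast at h2; linarith
  · right; push_cast at h2; linarith

lemma gap_global {x₀ : ℂ} (hx₀ : ‖x₀‖ < 1) (B : ℝ) (hB : 0 < B) (h3 : 0 < fk 3 x₀)
    (hk : ∀ k : ℕ, 0 < k → k ≠ 3 → fk k x₀ < fk 3 x₀)
    (hBM : ‖dilog (x₀ ^ 3)‖ / 9 / B < fk 3 x₀ ^ 2) :
    ∃ M, M < fk 3 x₀ ^ 2 ∧ ∀ᶠ q : ℝ × ℂ in 𝓝[>] 0 ×ˢ 𝓝 x₀,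
      ∀ φ ∈ Set.Icc (-Real.pi) Real.pi, B * q.1 ≤ |φ - 2 * Real.pi / 3| →
        B * q.1 ≤ |φ + 2 * Real.pi / 3| →
        ((q.1 : ℂ) * Lg q.2 (q.1 - φ * I)).re < M := by
  refine (isCompact_Icc (a := -Real.pi) (b := Real.pi)).induction_on
    (p := fun S => ∃ M, M < fk 3 x₀ ^ 2 ∧ ∀ᶠ q : ℝ × ℂ in 𝓝[>] 0 ×ˢ 𝓝 x₀,
      ∀ φ ∈ S, B * q.1 ≤ |φ - 2 * Real.pi / 3| →
        B * q.1 ≤ |φ + 2 * Real.pi / 3| →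
        ((q.1 : ℂ) * Lg q.2 (q.1 - φ * I)).re < M) ?_ ?_ ?_ ?_
  · exact ⟨0, by positivity, by simp⟩
  · rintro s t hst ⟨M, hM, h⟩
    exact ⟨M, hM, h.mono fun q hq φ hφ => hq φ (hst hφ)⟩
  · rintro s t ⟨M, hM, h⟩ ⟨M', hM', h'⟩
    refine ⟨max M M', max_lt hM hM', ?_⟩
    filter_upwards [h, h'] with q hq hq' φ hφ h1 h2
    rcases hφ with hφ | hφ
    · exact lt_max_of_lt_left (hq φ hφ h1 h2)
    · exact lt_max_of_lt_right (hq' φ hφ h1 h2)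
  · intro φ₀ hφ₀
    have key : ∃ M, M < fk 3 x₀ ^ 2 ∧ ∀ᶠ p in filt x₀ φ₀, B * p.1 ≤ |p.2.2 - 2 * Real.pi / 3| →
        B * p.1 ≤ |p.2.2 + 2 * Real.pi / 3| →
        ((p.1 : ℂ) * Lg p.2.1 (p.1 - p.2.2 * I)).re < M := by
      by_cases ho : orderOf (cexp (φ₀ * I)) = 3
      · obtain ⟨M, hM1, hM2⟩ := exists_between hBM
        refine ⟨M, hM2, ?_⟩
        have := gap_window hx₀ M B hB ho hM1
        rcases orderOf_three hφ₀ ho with rfl | rfl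
        · filter_upwards [this] with p hp h1 _ using hp h1
        · filter_upwards [this] with p hp _ h2
          exact hp (by rwa [sub_neg_eq_add])
      · have : max 0 (if 0 < orderOf (cexp (φ₀ * I)) then fk (orderOf (cexp (φ₀ * I))) x₀ ^ 2 else 0)
            < fk 3 x₀ ^ 2 := by
          refine max_lt (by positivity) ?_
          split_ifs with hpos
          · exact pow_lt_pow_left₀ (hk _ hpos ho) (fk_nonneg _ _) (by norm_num)
          · positivity
        obtain ⟨M, hM1, hM2⟩ := exists_between this
        refine ⟨M, hM2, ?_⟩
        have hg := gap_local (φ₀ := φ₀) hx₀ M ((le_max_left _ _).trans_lt hM1) (fun hpos => by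
          have h1 := (le_max_right _ _).trans_lt hM1
          rwa [if_pos hpos] at h1)
        exact hg.mono fun p hp _ _ => hp
    obtain ⟨M, hM, h⟩ := key
    have ht : Tendsto (fun r : (ℝ × ℂ) × ℝ => ((r.1.1, (r.1.2, r.2)) : ℝ × ℂ × ℝ))
        ((𝓝[>] 0 ×ˢ 𝓝 x₀) ×ˢ 𝓝 φ₀) (filt x₀ φ₀) :=
      (tendsto_fst.comp tendsto_fst).prodMk
        ((tendsto_snd.comp tendsto_fst).prodMk tendsto_snd)
    have h' := ht.eventually h
    rw [Filter.eventually_prod_iff] at h'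
    obtain ⟨pa, hpa, pb, hpb, hab⟩ := h'
    refine ⟨{φ | pb φ}, mem_nhdsWithin_of_mem_nhds hpb, M, hM, ?_⟩
    filter_upwards [hpa] with q hq φ hφ h1 h2
    exact hab hq hφ h1 h2

end PartC

/-! ### Part D: expansion in a sector -/

section PartD
open Topology

lemma norm_le_sector {z : ℂ} {B : ℝ} (hz : 0 < z.re) (hB : |z.im| ≤ B * z.re) :
    ‖z‖ ≤ (1 + B) * z.re := by
  have := Complex.norm_le_abs_re_add_abs_im z
  rw [abs_of_pos hz] at this
  linarith

lemma sector_bound3 {z : ℂ} {B : ℝ} (hB0 : 0 ≤ B) (hz : 0 < z.re) (hB : |z.im| ≤ B * z.re) :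
    ‖(cexp z - 1)⁻¹ - z⁻¹‖ ≤ 4 * (1 + B) + 4 := by
  have h1 := norm_le_sector hz hB
  have hz0 : z ≠ 0 := by rintro rfl; simp at hz
  have hzn : 0 < ‖z‖ := norm_pos_iff.mpr hz0
  rcases le_or_gt ‖z‖ (1 / 2) with h | h
  · have h2 := Complex.norm_exp_sub_one_sub_id_le (x := z) (by linarith)
    have h3 : ‖z‖ / 2 ≤ ‖cexp z - 1‖ := by
      have h4 : ‖z‖ ≤ ‖cexp z - 1‖ + ‖cexp z - 1 - z‖ := by
        have := norm_sub_le (cexp z - 1) (cexp z - 1 - z)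
        simpa using this
      nlinarith
    have he : cexp z - 1 ≠ 0 := by
      rw [← norm_pos_iff]; linarith
    have h5 : (cexp z - 1)⁻¹ - z⁻¹ = -(cexp z - 1 - z) / ((cexp z - 1) * z) := by
      field_simp; ring
    rw [h5, norm_div, norm_neg, norm_mul, div_le_iff₀ (by positivity)]
    have h6 : ‖z‖ / 2 * ‖z‖ ≤ ‖cexp z - 1‖ * ‖z‖ := by gcongr
    nlinarith
  · have h2 : 1 / (2 * (1 + B)) ≤ z.re := by
      rw [div_le_iff₀ (by positivity)]; nlinarith
    have h3 := norm_exp_sub_one_ge z 1 (by simp)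
    rw [one_mul] at h3
    have h4 : ‖(cexp z - 1)⁻¹‖ ≤ 2 * (1 + B) := by
      rw [norm_inv]
      have := inv_anti₀ (by positivity) (h2.trans h3)
      simpa using this
    have h5 : ‖z⁻¹‖ ≤ 2 := by
      rw [norm_inv]
      have := inv_anti₀ (by positivity) h.le
      simpa using this
    have := norm_sub_le (cexp z - 1)⁻¹ z⁻¹
    linarith

lemma root_facts {b : ℂ} (hb : b ^ 3 = 1) (hb1 : b ≠ 1) :
    ‖b‖ = 1 ∧ b ^ 2 + b + 1 = 0 ∧ 3 / 2 ≤ ‖b - 1‖ := by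
  have h1 : ‖b‖ = 1 := by
    have := congrArg norm hb
    rw [norm_pow, norm_one] at this
    exact (pow_eq_one_iff_of_nonneg (norm_nonneg _) (by norm_num)).mp this
  have h2 : b ^ 2 + b + 1 = 0 := by
    have : (b - 1) * (b ^ 2 + b + 1) = 0 := by linear_combination hb
    exact (mul_eq_zero.mp this).resolve_left (sub_ne_zero.mpr hb1)
  refine ⟨h1, h2, ?_⟩
  have h3 : (b - 1) ^ 2 = -(3 * b) := by linear_combination h2
  have h4 := congrArg norm h3
  rw [norm_pow, norm_neg, norm_mul, h1] at h4
  simp at h4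
  nlinarith [norm_nonneg (b - 1)]

lemma sector_bounda {z b : ℂ} {B : ℝ} (hb : b ^ 3 = 1) (hb1 : b ≠ 1) (hB0 : 0 ≤ B) (hz : 0 < z.re)
    (hB : |z.im| ≤ B * z.re) :
    ‖(b * cexp z - 1)⁻¹‖ ≤ 4 * (1 + B) + 4 := by
  obtain ⟨hn, -, h3⟩ := root_facts hb hb1
  have h1 := norm_le_sector hz hB
  rw [norm_inv]
  rcases le_or_gt ‖z‖ (1 / 2) with h | h
  · have h2 := Complex.norm_exp_sub_one_sub_id_le (x := z) (by linarith)
    have h4 : ‖b - 1‖ ≤ ‖b * cexp z - 1‖ + ‖b * (cexp z - 1)‖ := by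
      have := norm_sub_le (b * cexp z - 1) (b * (cexp z - 1))
      refine le_trans (le_of_eq ?_) this
      congr 1; ring
    rw [norm_mul, hn, one_mul] at h4
    have h5 : ‖cexp z - 1‖ ≤ ‖cexp z - 1 - z‖ + ‖z‖ := by
      have := norm_add_le (cexp z - 1 - z) z
      simpa using this
    have h6 : 1 / 2 ≤ ‖b * cexp z - 1‖ := by nlinarith [norm_nonneg z]
    have := inv_anti₀ (by positivity) h6
    simp at this
    linarith
  · have h2 : 1 / (2 * (1 + B)) ≤ z.re := by
      rw [div_le_iff₀ (by positivity)]; nlinarith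
    have h3 := norm_exp_sub_one_ge z b hn
    have := inv_anti₀ (by positivity) (h2.trans h3)
    simp at this
    linarith

lemma tendsto_bernoulli : Tendsto (fun z : ℂ => (cexp z - 1)⁻¹ - z⁻¹) (𝓝[≠] 0) (𝓝 (-1 / 2)) := by
  have h1 : Tendsto (fun z : ℂ => (cexp z - 1 - z) / z ^ 2) (𝓝[≠] 0) (𝓝 (1 / 2)) := by
    rw [tendsto_iff_norm_sub_tendsto_zero]
    have hlim : Tendsto (fun z : ℂ => ‖z‖) (𝓝[≠] 0) (𝓝 0) := by
      have := (continuous_norm (E := ℂ)).tendsto 0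
      rw [norm_zero] at this
      exact this.mono_left nhdsWithin_le_nhds
    refine squeeze_zero' (Filter.Eventually.of_forall fun _ => norm_nonneg _) ?_ hlim
    have hball : ∀ᶠ z : ℂ in 𝓝[≠] 0, ‖z‖ ≤ 1 :=
      (hlim.eventually (gt_mem_nhds one_pos)).mono fun z hz => hz.le
    filter_upwards [hball, self_mem_nhdsWithin] with z hz hz0
    have hz0' : z ≠ 0 := hz0
    have h2 := Complex.exp_bound (x := z) hz (n := 3) (by norm_num)
    simp [Finset.sum_range_succ, Nat.factorial] at h2
    have h3 : (cexp z - 1 - z) / z ^ 2 - 1 / 2 = (cexp z - (1 + z + z ^ 2 / 2)) / z ^ 2 := by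
      field_simp; ring
    rw [h3, norm_div, norm_pow, div_le_iff₀ (by positivity)]
    refine h2.trans ?_
    have : 0 ≤ ‖z‖ ^ 3 := by positivity
    nlinarith
  have h2 := (h1.mul tendsto_div_exp_sub_one).neg
  rw [show -(1 / 2 * (1 : ℂ)) = -1 / 2 by norm_num] at h2
  refine h2.congr' ?_
  have hne : ∀ᶠ z : ℂ in 𝓝[≠] 0, z * (cexp z - 1)⁻¹ ≠ 0 :=
    tendsto_div_exp_sub_one.eventually_ne one_ne_zero
  filter_upwards [hne, self_mem_nhdsWithin] with z hz hz0
  have hz0' : z ≠ 0 := hz0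
  have he : cexp z - 1 ≠ 0 := by
    intro h; rw [h] at hz; simp at hz
  field_simp
  ring

noncomputable def cc (a : ℂ) (j : ℕ) : ℂ := if 3 ∣ j then -1 / 2 else (a ^ j - 1)⁻¹

noncomputable def Ec (a x : ℂ) : ℂ := ∑' j : ℕ, x ^ (j + 1) / ((j : ℂ) + 1) * cc a (j + 1)

/-- the sector -/
def Sec (B : ℝ) : Set ℂ := {w | 0 < w.re ∧ |w.im| ≤ B * w.re}

lemma pow_of_dvd {a : ℂ} (ha : a ^ 3 = 1) {j : ℕ} (h : 3 ∣ j) : a ^ j = 1 := by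
  obtain ⟨c, rfl⟩ := h
  rw [pow_mul, ha, one_pow]

lemma pow_of_ndvd {a : ℂ} (ha : a ^ 3 = 1) (ha1 : a ≠ 1) {j : ℕ} (h : ¬ 3 ∣ j) :
    a ^ j ≠ 1 ∧ (a ^ j) ^ 3 = 1 := by
  refine ⟨?_, by rw [← pow_mul, mul_comm, pow_mul, ha, one_pow]⟩
  intro hj
  have : orderOf a = 3 := orderOf_eq_prime ha ha1
  exact h (this ▸ orderOf_dvd_of_pow_eq_one hj)

lemma summable_Lg (x : ℂ) (hx : ‖x‖ < 1) (w : ℂ) (hw : 0 < w.re) :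
    Summable (fun j : ℕ => x ^ (j + 1) / ((j : ℂ) + 1) * (cexp (((j : ℂ) + 1) * w) - 1)⁻¹) := by
  have h1 : w = ((w.re : ℝ) : ℂ) - ((-w.im : ℝ) : ℂ) * I := by
    apply Complex.ext <;> simp
  have hs : Summable (fun j : ℕ => (w.re : ℂ) *
      (x ^ (j + 1) / ((j : ℂ) + 1) * (cexp (((j : ℂ) + 1) * w) - 1)⁻¹)) := by
    refine Summable.of_norm_bounded (g := fun j => ‖x‖ ^ (j + 1))
      ((summable_nat_add_iff 1).mpr (summable_geometric_of_lt_one (norm_nonneg _) hx)) fun j => ?_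
    have := norm_term_bound x w.re (-w.im) hw j
    rwa [← h1] at this
  exact (summable_mul_left_iff (by exact_mod_cast hw.ne')).mp hs

lemma summable_dvd (x ν : ℂ) (hx : ‖x‖ < 1) :
    Summable (fun j : ℕ => x ^ (j + 1) / ((j : ℂ) + 1) * (if 3 ∣ j + 1 then ν / ((j : ℂ) + 1) else 0)) := by
  refine Summable.of_norm_bounded (g := fun j => ‖x‖ ^ (j + 1) * ‖ν‖)
      (((summable_nat_add_iff 1).mpr (summable_geometric_of_lt_one (norm_nonneg _) hx)).mul_right _)
      fun j => ?_
  have hj : (1 : ℝ) ≤ (j : ℝ) + 1 := by linarith [Nat.cast_nonneg (α := ℝ) j]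
  rw [norm_mul, norm_div, norm_pow, norm_cast_succ]
  refine mul_le_mul (div_le_self (by positivity) hj) ?_ (norm_nonneg _) (by positivity)
  split_ifs
  · rw [norm_div, norm_cast_succ]
    exact div_le_self (norm_nonneg _) hj
  · simp

lemma sector_lim {x₀ : ℂ} (hx₀ : ‖x₀‖ < 1) (a : ℂ) (ha : a ^ 3 = 1) (ha1 : a ≠ 1) (θ : ℂ)
    (hθ : cexp (-θ) = a) (B : ℝ) (hB0 : 0 ≤ B) :
    (Tendsto (fun p : ℂ × ℂ => Lg p.1 (p.2 - θ) - dilog (p.1 ^ 3) / 9 / p.2)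
      (𝓝 x₀ ×ˢ 𝓝[Sec B] 0) (𝓝 (Ec a x₀))) := by
  have hθre : θ.re = 0 := by
    have h1 := (root_facts ha ha1).1
    rw [← hθ, Complex.norm_exp, Real.exp_eq_one_iff] at h1
    simpa using h1
  have hx : Tendsto (fun p : ℂ × ℂ => p.1) (𝓝 x₀ ×ˢ 𝓝[Sec B] 0) (𝓝 x₀) := tendsto_fst
  have hw : Tendsto (fun p : ℂ × ℂ => p.2) (𝓝 x₀ ×ˢ 𝓝[Sec B] 0) (𝓝[Sec B] 0) := tendsto_snd
  have hsec : ∀ᶠ p : ℂ × ℂ in 𝓝 x₀ ×ˢ 𝓝[Sec B] 0, p.2 ∈ Sec B := hw.eventually self_mem_nhdsWithin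
  have hw0 : Tendsto (fun p : ℂ × ℂ => p.2) (𝓝 x₀ ×ˢ 𝓝[Sec B] 0) (𝓝 0) :=
    hw.mono_right nhdsWithin_le_nhds
  obtain ⟨ρ, hρ1, hρ2⟩ := exists_between hx₀
  have hρ0 : 0 ≤ ρ := (norm_nonneg _).trans hρ1.le
  have h5 : ∀ᶠ p in 𝓝 x₀ ×ˢ 𝓝[Sec B] 0, ‖p.1‖ < ρ := hx.norm.eventually (gt_mem_nhds hρ1)
  have hexp : ∀ (w : ℂ) (j : ℕ), cexp (((j : ℂ) + 1) * (w - θ)) =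
      a ^ (j + 1) * cexp (((j : ℂ) + 1) * w) := by
    intro w j
    rw [← hθ, ← Complex.exp_nat_mul, ← Complex.exp_add]
    congr 1
    push_cast
    ring
  have main : Tendsto (fun p : ℂ × ℂ => ∑' j : ℕ, p.1 ^ (j + 1) / ((j : ℂ) + 1) *
      ((cexp (((j : ℂ) + 1) * (p.2 - θ)) - 1)⁻¹ - (if 3 ∣ j + 1 then p.2⁻¹ / ((j : ℂ) + 1) else 0)))
      (𝓝 x₀ ×ˢ 𝓝[Sec B] 0) (𝓝 (Ec a x₀)) := by
    refine tendsto_tsum_of_dominated_convergence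
      (bound := fun j => ρ ^ (j + 1) * (4 * (1 + B) + 4)) ?_ ?_ ?_
    · exact ((summable_nat_add_iff 1).mpr (summable_geometric_of_lt_one hρ0 hρ2)).mul_right _
    · intro j
      refine ((hx.pow (j + 1)).div_const ((j : ℂ) + 1)).mul ?_
      simp only [hexp, cc]
      split_ifs with hd
      · rw [pow_of_dvd ha hd]
        have hto : Tendsto (fun p : ℂ × ℂ => ((j : ℂ) + 1) * p.2) (𝓝 x₀ ×ˢ 𝓝[Sec B] 0) (𝓝[≠] 0) := by
          refine tendsto_nhdsWithin_iff.mpr ⟨by simpa using hw0.const_mul ((j : ℂ) + 1), ?_⟩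
          filter_upwards [hsec] with p hp
          refine mul_ne_zero (cast_succ_ne j) ?_
          intro h
          have := hp.1
          simp [h] at this
        refine (tendsto_bernoulli.comp hto).congr fun p => ?_
        simp only [Function.comp_def, one_mul, mul_inv, div_eq_mul_inv]
        ring
      · obtain ⟨hne, -⟩ := pow_of_ndvd ha ha1 hd
        simp only [sub_zero]
        refine Tendsto.inv₀ ?_ (sub_ne_zero.mpr hne)
        have : Tendsto (fun p : ℂ × ℂ => cexp (((j : ℂ) + 1) * p.2)) (𝓝 x₀ ×ˢ 𝓝[Sec B] 0) (𝓝 1) := by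
          have := (Complex.continuous_exp.tendsto _).comp (hw0.const_mul ((j : ℂ) + 1))
          simpa [Function.comp_def] using this
        have := (this.const_mul (a ^ (j + 1))).sub_const 1
        simpa using this
    · filter_upwards [hsec, h5] with p hp hp5 j
      have hj : (1 : ℝ) ≤ (j : ℝ) + 1 := by linarith [Nat.cast_nonneg (α := ℝ) j]
      have hj0 : (0 : ℝ) < (j : ℝ) + 1 := by linarith
      rw [norm_mul, norm_div, norm_pow, norm_cast_succ]
      refine mul_le_mul ((div_le_self (by positivity) hj).trans
        (pow_le_pow_left₀ (norm_nonneg _) hp5.le _)) ?_ (norm_nonneg _) (by positivity)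
      have hre : (((j : ℂ) + 1) * p.2).re = ((j : ℝ) + 1) * p.2.re := by simp
      have him : (((j : ℂ) + 1) * p.2).im = ((j : ℝ) + 1) * p.2.im := by simp
      have hs1 : 0 < (((j : ℂ) + 1) * p.2).re := by rw [hre]; exact mul_pos hj0 hp.1
      have hs2 : |(((j : ℂ) + 1) * p.2).im| ≤ B * (((j : ℂ) + 1) * p.2).re := by
        rw [hre, him, abs_mul, abs_of_pos hj0]
        nlinarith [hp.2]
      rw [hexp]
      split_ifs with hd
      · rw [pow_of_dvd ha hd, one_mul]
        have := sector_bound3 hB0 hs1 hs2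
        rwa [mul_inv, mul_comm ((j:ℂ)+1)⁻¹, ← div_eq_mul_inv] at this
      · obtain ⟨hne, h3⟩ := pow_of_ndvd ha ha1 hd
        rw [sub_zero]
        exact sector_bounda h3 hne hB0 hs1 hs2
  refine main.congr' ?_
  filter_upwards [hsec, h5] with p hp hp5
  have hp1 : ‖p.1‖ < 1 := hp5.trans hρ2
  have hS1 := summable_Lg p.1 hp1 (p.2 - θ) (by simpa [hθre] using hp.1)
  have hS2 := summable_dvd p.1 p.2⁻¹ hp1
  have := tsum_dvd p.1 p.2⁻¹ 3 (by norm_num)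
  rw [show dilog (p.1 ^ 3) / 9 / p.2 = p.2⁻¹ * (dilog (p.1 ^ 3) / ((3 : ℕ) : ℂ) ^ 2) by
    norm_num [div_eq_mul_inv]; ring, ← this, Lg, ← hS1.tsum_sub hS2]
  refine tsum_congr fun j => ?_
  ring

lemma Ec_ne {x : ℂ} (hx : ‖x‖ < 1) (him : x.im ≠ 0) {a : ℂ} (ha : a ^ 3 = 1) (ha1 : a ≠ 1) :
    (Ec a x).re ≠ (Ec a⁻¹ x).re := by
  obtain ⟨hn, hq, -⟩ := root_facts ha ha1
  have ha0 : a ≠ 0 := by rintro rfl; simp at ha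
  have hainv : a⁻¹ = a ^ 2 := by field_simp; exact ha.symm
  have hinv3 : a⁻¹ ^ 3 = 1 := by rw [inv_pow, ha, inv_one]
  have hinv1 : a⁻¹ ≠ 1 := by rwa [Ne, inv_eq_one]
  have hlog : ∀ b : ℂ, ‖b‖ = 1 → HasSum (fun j : ℕ => (b * x) ^ (j + 1) / ((j : ℂ) + 1))
      (-Complex.log (1 - b * x)) := by
    intro b hb
    have hbx : ‖b * x‖ < 1 := by rw [norm_mul, hb, one_mul]; exact hx
    have := (hasSum_nat_add_iff' 1).mpr (Complex.hasSum_taylorSeries_neg_log hbx)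
    simpa using this
  have hccb : ∀ (b : ℂ), b ^ 3 = 1 → b ≠ 1 →
      Summable (fun j : ℕ => x ^ (j + 1) / ((j : ℂ) + 1) * cc b (j + 1)) := by
    intro b hb hb1
    refine Summable.of_norm_bounded (g := fun j => ‖x‖ ^ (j + 1) * 1)
      (((summable_nat_add_iff 1).mpr (summable_geometric_of_lt_one (norm_nonneg _) hx)).mul_right _)
      fun j => ?_
    have hj : (1 : ℝ) ≤ (j : ℝ) + 1 := by linarith [Nat.cast_nonneg (α := ℝ) j]
    rw [norm_mul, norm_div, norm_pow, norm_cast_succ]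
    refine mul_le_mul (div_le_self (by positivity) hj) ?_ (norm_nonneg _) (by positivity)
    unfold cc
    split_ifs with hd
    · norm_num
    · obtain ⟨hne, h3⟩ := pow_of_ndvd hb hb1 hd
      have := (root_facts h3 hne).2.2
      rw [norm_inv]
      exact inv_le_one_of_one_le₀ (by linarith)
  have hsub : Ec a x - Ec a⁻¹ x = (1 / 3) * (-Complex.log (1 - a⁻¹ * x) - -Complex.log (1 - a * x)) := by
    rw [Ec, Ec, ← (hccb a ha ha1).tsum_sub (hccb a⁻¹ hinv3 hinv1)]
    have hn' : ‖a⁻¹‖ = 1 := by rw [norm_inv, hn, inv_one]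
    rw [← ((hlog a⁻¹ hn').sub (hlog a hn)).tsum_eq, ← tsum_mul_left]
    refine tsum_congr fun j => ?_
    have key : cc a (j + 1) - cc a⁻¹ (j + 1) = (1 / 3) * (a⁻¹ ^ (j + 1) - a ^ (j + 1)) := by
      unfold cc
      split_ifs with hd
      · rw [pow_of_dvd ha hd, pow_of_dvd hinv3 hd]; ring
      · obtain ⟨hne, h3⟩ := pow_of_ndvd ha ha1 hd
        have hq' := (root_facts h3 hne).2.1
        rw [inv_pow]
        generalize a ^ (j + 1) = b at *
        have hb0 : b ≠ 0 := by rintro rfl; simp at h3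
        have hbi : b⁻¹ = b ^ 2 := by field_simp; exact h3.symm
        have h1 : b - 1 ≠ 0 := sub_ne_zero.mpr hne
        have h2 : b ^ 2 - 1 ≠ 0 := by
          intro h
          have h4 : b = 1 := by linear_combination h3 - b * h
          exact hne h4
        rw [hbi]
        field_simp
        have h5 : b ^ 2 = -b - 1 := by linear_combination hq'
        have h6 : b ^ 3 = 1 := h3
        linear_combination (3*b - b^2) * h3 + (b - b^2) * hq'
    rw [← mul_sub, key, mul_pow, mul_pow]
    ring
  intro heq
  have h0 : (Ec a x - Ec a⁻¹ x).re = 0 := by rw [Complex.sub_re, heq, sub_self]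
  rw [hsub, show (1 / 3 : ℂ) = ((1 / 3 : ℝ) : ℂ) by norm_num, Complex.re_ofReal_mul] at h0
  simp only [Complex.sub_re, Complex.neg_re, Complex.log_re] at h0
  have hpos : ∀ b : ℂ, ‖b‖ = 1 → 0 < ‖1 - b * x‖ := by
    intro b hb
    have h1 := norm_sub_norm_le 1 (b * x)
    rw [norm_mul, hb, one_mul, norm_one] at h1
    linarith
  have hle : ‖1 - a * x‖ = ‖1 - a⁻¹ * x‖ := by
    refine Real.log_injOn_pos (Set.mem_Ioi.mpr (hpos a hn))
      (Set.mem_Ioi.mpr (hpos a⁻¹ (by rw [norm_inv, hn, inv_one]))) ?_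
    linarith
  have hconj : a⁻¹ = (starRingEnd ℂ) a := by
    rw [Complex.inv_def, Complex.normSq_eq_norm_sq, hn]; simp
  have haim : a.im ≠ 0 := by
    intro h
    have h1 := congrArg Complex.re hq
    simp [pow_two, h] at h1
    nlinarith [sq_nonneg (a.re + 1 / 2)]
  have hsq : Complex.normSq (1 - a * x) = Complex.normSq (1 - a⁻¹ * x) := by
    rw [Complex.normSq_eq_norm_sq, Complex.normSq_eq_norm_sq, hle]
  rw [hconj] at hsq
  simp only [Complex.normSq_apply, Complex.sub_re, Complex.sub_im, Complex.mul_re, Complex.mul_im,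
    Complex.one_re, Complex.one_im, Complex.conj_re, Complex.conj_im] at hsq
  have : a.im * x.im = 0 := by nlinarith
  exact (mul_ne_zero haim him) this

end PartD


/-! ### Part E1: the dilogarithm -/

section PartE1
open Topology

lemma dilog_zero : dilog 0 = 0 := by
  unfold dilog
  simp

lemma dilog_hasDerivAt (z : ℂ) (hz : ‖z‖ < 1) :
    HasDerivAt dilog (∑' n : ℕ, z ^ n / ((n : ℂ) + 1)) z := by
  obtain ⟨ρ, h1, h2⟩ := exists_between hz
  have hρ : 0 ≤ ρ := (norm_nonneg z).trans h1.le
  refine hasDerivAt_tsum_of_isPreconnected (u := fun n : ℕ => ρ ^ n)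
    (g := fun (n : ℕ) (z : ℂ) => z ^ (n + 1) / ((n : ℂ) + 1) ^ 2)
    (g' := fun (n : ℕ) (z : ℂ) => z ^ n / ((n : ℂ) + 1)) (t := Metric.ball 0 ρ) (y₀ := 0)
    (summable_geometric_of_lt_one hρ h2) Metric.isOpen_ball
    (convex_ball _ _).isPreconnected ?_ ?_ ?_ ?_ ?_
  · intro n y _
    have h := (hasDerivAt_pow (n + 1) y).div_const (((n : ℂ) + 1) ^ 2)
    refine h.congr_deriv ?_
    have := cast_succ_ne n
    push_cast
    field_simp
  · intro n y hy
    have hy' : ‖y‖ < ρ := by simpa using hy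
    rw [norm_div, norm_pow, norm_cast_succ]
    refine (div_le_self (by positivity) (by linarith [Nat.cast_nonneg (α := ℝ) n])).trans ?_
    gcongr
  · simp; exact lt_of_le_of_lt (norm_nonneg z) h1
  · simp [summable_zero]
  · simpa using h1

lemma dilog_deriv_mul (z : ℂ) (hz : ‖z‖ < 1) :
    z * (∑' n : ℕ, z ^ n / ((n : ℂ) + 1)) = -Complex.log (1 - z) := by
  have h := (hasSum_nat_add_iff' 1).mpr (Complex.hasSum_taylorSeries_neg_log hz)
  simp at h
  rw [← h.tsum_eq, ← tsum_mul_left]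
  congr 1; ext n; ring

lemma dilog_analyticOnNhd : AnalyticOnNhd ℂ dilog (Metric.ball 0 1) := by
  apply DifferentiableOn.analyticOnNhd _ Metric.isOpen_ball
  intro z hz
  exact (dilog_hasDerivAt z (by simpa using hz)).differentiableAt.differentiableWithinAt

lemma dilog_continuousAt (z : ℂ) (hz : ‖z‖ < 1) : ContinuousAt dilog z :=
  (dilog_hasDerivAt z hz).continuousAt

lemma dilog_ray_lb (x : ℂ) (hx : ‖x‖ < 1) (c : ℂ) (P P' : ℝ → ℝ) (hP : ∀ t, HasDerivAt P (P' t) t)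
    (hP0 : P 0 = 0)
    (h : ∀ t ∈ Set.Ioo (0 : ℝ) 1, t * P' t ≤ (c * (-Complex.log (1 - t * x))).re) :
    P 1 ≤ (c * dilog x).re := by
  have hn : ∀ t ∈ Set.Icc (0 : ℝ) 1, ‖(t : ℂ) * x‖ < 1 := by
    intro t ht
    rw [norm_mul, Complex.norm_real, Real.norm_of_nonneg ht.1]
    nlinarith [ht.2, norm_nonneg x]
  have hd : ∀ t ∈ Set.Icc (0 : ℝ) 1, HasDerivAt (fun t : ℝ => (c * dilog (t * x)).re - P t)
      ((c * ((∑' n : ℕ, ((t : ℂ) * x) ^ n / ((n : ℂ) + 1)) * x)).re - P' t) t := by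
    intro t ht
    refine HasDerivAt.sub ?_ (hP t)
    have h1 : HasDerivAt (fun w : ℂ => c * dilog (w * x))
        (c * ((∑' n : ℕ, ((t : ℂ) * x) ^ n / ((n : ℂ) + 1)) * x)) (t : ℂ) := by
      have h2 := (dilog_hasDerivAt (t * x) (hn t ht)).comp (t : ℂ)
        ((hasDerivAt_id (t : ℂ)).mul_const x)
      simpa using h2.const_mul c
    exact h1.real_of_complex
  have hm := monotoneOn_of_deriv_nonneg (convex_Icc (0 : ℝ) 1)
    (f := fun t : ℝ => (c * dilog (t * x)).re - P t)
    (fun t ht => (hd t ht).continuousAt.continuousWithinAt)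
    (fun t ht => (hd t (interior_subset ht)).differentiableAt.differentiableWithinAt)
    (by
      intro t ht
      have ht' := interior_subset ht
      rw [interior_Icc] at ht
      rw [(hd t ht').deriv]
      have h3 := h t ht
      rw [← dilog_deriv_mul _ (hn t ht')] at h3
      have h4 : c * ((t : ℂ) * x * (∑' n : ℕ, ((t : ℂ) * x) ^ n / ((n : ℂ) + 1)))
        = (t : ℂ) * (c * ((∑' n : ℕ, ((t : ℂ) * x) ^ n / ((n : ℂ) + 1)) * x)) := by ring
      rw [h4, Complex.re_ofReal_mul] at h3
      have := le_of_mul_le_mul_left h3 ht.1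
      linarith)
  have := hm (by simp : (0 : ℝ) ∈ Set.Icc (0 : ℝ) 1) (by simp : (1 : ℝ) ∈ Set.Icc (0 : ℝ) 1) (by norm_num)
  simp [hP0, dilog_zero] at this
  simpa using this

lemma neg_log_re (u : ℂ) (hu : ‖u‖ < 1) :
    (-Complex.log (1 - u)).re = -(1 / 2) * Real.log (1 - 2 * u.re + ‖u‖ ^ 2) := by
  rw [Complex.neg_re, Complex.log_re]
  have h1 : 1 - 2 * u.re + ‖u‖ ^ 2 = ‖1 - u‖ ^ 2 := by
    rw [← Complex.normSq_eq_norm_sq, ← Complex.normSq_eq_norm_sq, Complex.normSq_apply,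
      Complex.normSq_apply]
    simp; ring
  rw [h1, Real.log_pow]; push_cast; ring

lemma neg_log_im (u : ℂ) (hu : ‖u‖ < 1) :
    (-Complex.log (1 - u)).im = Real.arctan (u.im / (1 - u.re)) := by
  have h1 : 0 < (1 - u).re := by
    have := Complex.re_le_norm u
    simp; linarith
  have h2 := Complex.abs_arg_lt_pi_div_two_iff.mpr (Or.inl h1)
  rw [abs_lt] at h2
  have h3 := Real.arctan_tan h2.1 h2.2
  rw [Complex.tan_arg] at h3
  rw [Complex.neg_im, Complex.log_im, ← h3, ← Real.arctan_neg]
  simp [neg_div]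

lemma arctan_lb (z : ℝ) (hz : 0 ≤ z) : z - z ^ 3 / 3 ≤ Real.arctan z := by
  have hd : ∀ t : ℝ, HasDerivAt (fun t : ℝ => Real.arctan t - (t - t ^ 3 / 3))
      (1 / (1 + t ^ 2) - (1 - t ^ 2)) t := by
    intro t
    refine (Real.hasDerivAt_arctan t).sub ((hasDerivAt_id t).sub ?_)
    have := (hasDerivAt_pow 3 t).div_const 3
    refine this.congr_deriv ?_
    push_cast
    ring
  have hm := monotoneOn_of_deriv_nonneg (convex_Ici (0 : ℝ))
    (f := fun t : ℝ => Real.arctan t - (t - t ^ 3 / 3))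
    (fun t ht => (hd t).continuousAt.continuousWithinAt)
    (fun t ht => (hd t).differentiableAt.differentiableWithinAt)
    (by
      intro t _
      rw [(hd t).deriv]
      have : 1 / (1 + t ^ 2) - (1 - t ^ 2) = t ^ 4 / (1 + t ^ 2) := by
        field_simp; ring
      rw [this]; positivity)
  have := hm (by simp : (0 : ℝ) ∈ Set.Ici (0 : ℝ)) hz hz
  simp at this
  linarith

lemma ray_norm {x : ℂ} (hx : ‖x‖ < 1) {t : ℝ} (ht : t ∈ Set.Ioo (0 : ℝ) 1) :
    ‖(t : ℂ) * x‖ < 1 ∧ ‖(t : ℂ) * x‖ = t * ‖x‖ := by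
  have : ‖(t : ℂ) * x‖ = t * ‖x‖ := by
    rw [norm_mul, Complex.norm_real, Real.norm_of_nonneg ht.1.le]
  refine ⟨?_, this⟩
  rw [this]; nlinarith [ht.1, ht.2, norm_nonneg x]

lemma dilog_re_lb (x : ℂ) (hx : ‖x‖ < 1) : x.re - ‖x‖ ^ 2 / 4 ≤ (dilog x).re := by
  have := dilog_ray_lb x hx 1 (fun t => t * x.re - t ^ 2 * (‖x‖ ^ 2 / 4))
    (fun t => x.re - 2 * t * (‖x‖ ^ 2 / 4)) ?_ (by simp) ?_
  · simpa using this
  · intro t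
    have h1 := ((hasDerivAt_id t).mul_const x.re).sub ((hasDerivAt_pow 2 t).mul_const (‖x‖ ^ 2 / 4))
    refine h1.congr_deriv ?_
    push_cast
    ring
  · intro t ht
    obtain ⟨h1, h2⟩ := ray_norm hx ht
    rw [one_mul, neg_log_re _ h1, h2, Complex.re_ofReal_mul]
    have h3 : 0 < 1 - 2 * (t * x.re) + (t * ‖x‖) ^ 2 := by
      have := Complex.re_le_norm x
      rw [h2] at h1
      have := ht.1
      nlinarith [sq_nonneg (1 - t * ‖x‖), mul_le_mul_of_nonneg_left (Complex.re_le_norm x) ht.1.le]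
    have := Real.log_le_sub_one_of_pos h3
    nlinarith

lemma dilog_re_lb_neg (x : ℂ) (hx : ‖x‖ < 1) (ha : x.re ≤ 0) (hb : 2 * x.re ^ 2 ≤ ‖x‖ ^ 2) :
    x.re - (‖x‖ ^ 2 - 2 * x.re ^ 2) / 4 ≤ (dilog x).re := by
  have := dilog_ray_lb x hx 1 (fun t => t * x.re - t ^ 2 * ((‖x‖ ^ 2 - 2 * x.re ^ 2) / 4))
    (fun t => x.re - 2 * t * ((‖x‖ ^ 2 - 2 * x.re ^ 2) / 4)) ?_ (by simp) ?_
  · simpa using this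
  · intro t
    have h1 := ((hasDerivAt_id t).mul_const x.re).sub
      ((hasDerivAt_pow 2 t).mul_const ((‖x‖ ^ 2 - 2 * x.re ^ 2) / 4))
    refine h1.congr_deriv ?_
    push_cast
    ring
  · intro t ht
    obtain ⟨h1, h2⟩ := ray_norm hx ht
    rw [one_mul, neg_log_re _ h1, h2, Complex.re_ofReal_mul]
    have h3 : 0 < 1 - 2 * (t * x.re) + (t * ‖x‖) ^ 2 := by
      have := mul_nonneg ht.1.le (neg_nonneg.mpr ha)
      nlinarith [sq_nonneg (t * ‖x‖)]
    set y := 2 * (-(t * x.re)) + t ^ 2 * (‖x‖ ^ 2 - 2 * x.re ^ 2) with hy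
    have ha' : 0 ≤ -(t * x.re) := by nlinarith [ht.1]
    have hc' : 0 ≤ t ^ 2 * (‖x‖ ^ 2 - 2 * x.re ^ 2) := mul_nonneg (sq_nonneg _) (by linarith)
    have hy0 : 0 ≤ y := by linarith
    have h4 := Real.quadratic_le_exp_of_nonneg hy0
    have h5 : 1 - 2 * (t * x.re) + (t * ‖x‖) ^ 2 ≤ Real.exp y := by
      refine le_trans ?_ h4
      rw [hy]
      nlinarith [mul_nonneg ha' hc', sq_nonneg (t ^ 2 * (‖x‖ ^ 2 - 2 * x.re ^ 2))]
    have h6 := Real.log_le_log h3 h5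
    rw [Real.log_exp] at h6
    rw [hy] at h6
    nlinarith

lemma neg_I_mul_re (z : ℂ) : (-I * z).re = z.im := by simp

lemma dilog_im_lb_pos (x : ℂ) (hx : ‖x‖ < 1) (ha : 0 ≤ x.re) (hb : 0 ≤ x.im) :
    x.im - x.im ^ 3 / 9 ≤ (dilog x).im := by
  have := dilog_ray_lb x hx (-I) (fun t => t * x.im - t ^ 3 * (x.im ^ 3 / 9))
    (fun t => x.im - 3 * t ^ 2 * (x.im ^ 3 / 9)) ?_ (by simp) ?_
  · rw [neg_I_mul_re] at this; simpa using this
  · intro t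
    have h1 := ((hasDerivAt_id t).mul_const x.im).sub ((hasDerivAt_pow 3 t).mul_const (x.im ^ 3 / 9))
    refine h1.congr_deriv ?_
    push_cast
    ring
  · intro t ht
    obtain ⟨h1, h2⟩ := ray_norm hx ht
    rw [neg_I_mul_re, neg_log_im _ h1, Complex.re_ofReal_mul, Complex.im_ofReal_mul]
    have h0 : 0 ≤ t * x.im := mul_nonneg ht.1.le hb
    have h3 : t * x.im ≤ t * x.im / (1 - t * x.re) := by
      have := Complex.re_le_norm ((t : ℂ) * x)
      rw [Complex.re_ofReal_mul] at this
      rw [le_div_iff₀ (by linarith)]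
      nlinarith [mul_nonneg ht.1.le ha]
    refine le_trans ?_ (Real.arctan_mono h3)
    refine le_trans (le_of_eq ?_) (arctan_lb _ h0)
    ring

lemma dilog_im_lb_neg (x : ℂ) (hx : ‖x‖ < 1) (ha : x.re ≤ 0) (hb : 0 ≤ x.im) :
    x.im * (2 / 1.35 - 1 / 1.35 ^ 2 + x.re / (2 * 1.35 ^ 2)) - x.im ^ 3 / 9 ≤ (dilog x).im := by
  have := dilog_ray_lb x hx (-I)
    (fun t => t * (x.im * (2 / 1.35 - 1 / 1.35 ^ 2)) + t ^ 2 * (x.im * (x.re / (2 * 1.35 ^ 2)))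
      - t ^ 3 * (x.im ^ 3 / 9))
    (fun t => x.im * (2 / 1.35 - 1 / 1.35 ^ 2) + 2 * t * (x.im * (x.re / (2 * 1.35 ^ 2)))
      - 3 * t ^ 2 * (x.im ^ 3 / 9)) ?_ (by simp) ?_
  · rw [neg_I_mul_re] at this
    refine le_trans (le_of_eq ?_) this
    ring
  · intro t
    have h1 := (((hasDerivAt_id t).mul_const (x.im * (2 / 1.35 - 1 / 1.35 ^ 2))).add
      ((hasDerivAt_pow 2 t).mul_const (x.im * (x.re / (2 * 1.35 ^ 2))))).sub
      ((hasDerivAt_pow 3 t).mul_const (x.im ^ 3 / 9))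
    refine h1.congr_deriv ?_
    push_cast
    ring
  · intro t ht
    obtain ⟨h1, h2⟩ := ray_norm hx ht
    rw [neg_I_mul_re, neg_log_im _ h1, Complex.re_ofReal_mul, Complex.im_ofReal_mul]
    have h0 : 0 ≤ t * x.im := mul_nonneg ht.1.le hb
    have hv : 1 ≤ 1 - t * x.re := by nlinarith [mul_nonneg ht.1.le (neg_nonneg.mpr ha)]
    set v := 1 - t * x.re with hvd
    have hz0 : 0 ≤ t * x.im / v := div_nonneg h0 (by linarith)
    have hz1 : t * x.im / v ≤ t * x.im := div_le_self h0 hv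
    have hz2 : t * x.im * (2 / 1.35 - v / 1.35 ^ 2) ≤ t * x.im / v := by
      rw [div_eq_mul_inv _ v]
      refine mul_le_mul_of_nonneg_left ?_ h0
      rw [inv_eq_one_div, le_div_iff₀ (by linarith)]
      have : 0 ≤ (v / 1.35 - 1) ^ 2 := sq_nonneg _
      have h7 : (v / 1.35 - 1) ^ 2 = 1 - (2 / 1.35 - v / 1.35 ^ 2) * v := by ring
      linarith
    have hz3 : (t * x.im / v) ^ 3 ≤ (t * x.im) ^ 3 := pow_le_pow_left₀ hz0 hz1 3
    have h8 := arctan_lb _ hz0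
    have h9 : t * (x.im * (2 / 1.35 - 1 / 1.35 ^ 2) + 2 * t * (x.im * (x.re / (2 * 1.35 ^ 2)))
      - 3 * t ^ 2 * (x.im ^ 3 / 9)) = t * x.im * (2 / 1.35 - v / 1.35 ^ 2) - (t * x.im) ^ 3 / 3 := by
      rw [hvd]; ring
    rw [h9]; linarith

lemma dilog_norm_le (z : ℂ) (hz : ‖z‖ ≤ 1) : ‖dilog z‖ ≤ Real.pi ^ 2 / 6 * ‖z‖ := by
  have h1 := (hasSum_nat_add_iff' 1).mpr hasSum_zeta_two
  simp only [Finset.sum_range_one, Nat.cast_zero, zero_pow two_ne_zero, div_zero, sub_zero] at h1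
  refine tsum_of_norm_bounded (h1.mul_right ‖z‖) ?_
  intro n
  rw [norm_div, norm_pow, norm_pow, norm_cast_succ]
  push_cast
  rw [div_mul_eq_mul_div, one_mul]
  gcongr
  calc ‖z‖ ^ (n + 1) = ‖z‖ ^ n * ‖z‖ := pow_succ _ _
    _ ≤ 1 * ‖z‖ := by gcongr; exact pow_le_one₀ (norm_nonneg _) hz
    _ = ‖z‖ := one_mul _

lemma dilog_conj (z : ℂ) : dilog ((starRingEnd ℂ) z) = (starRingEnd ℂ) (dilog z) := by
  unfold dilog
  rw [Complex.conj_tsum]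
  congr 1; ext n
  simp

/-- the quantity `(|L| + Re L)/2`, the square of `Re √L` -/
noncomputable def gs (x : ℂ) : ℝ := (‖dilog x‖ + (dilog x).re) / 2

lemma gs_conj (x : ℂ) : gs ((starRingEnd ℂ) x) = gs x := by
  unfold gs; rw [dilog_conj]; simp

lemma gs_re (x : ℂ) : (dilog x).re ≤ gs x := by
  unfold gs; linarith [Complex.re_le_norm (dilog x)]

lemma gs_le (x : ℂ) : gs x ≤ ‖dilog x‖ := by
  unfold gs; linarith [Complex.re_le_norm (dilog x)]

lemma gs_le_half (x : ℂ) (h : (dilog x).re ≤ 0) : gs x ≤ ‖dilog x‖ / 2 := by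
  unfold gs; linarith

lemma gs_lb (x : ℂ) (T R m : ℝ) (hT : 0 ≤ T) (hR : -R ≤ (dilog x).re) (hm0 : 0 ≤ m)
    (hm : m ≤ (dilog x).im) (h : 4 * T * (T + R) ≤ m ^ 2) : T ≤ gs x := by
  unfold gs
  have h1 : ‖dilog x‖ ^ 2 = (dilog x).re ^ 2 + (dilog x).im ^ 2 := by
    rw [← Complex.normSq_eq_norm_sq, Complex.normSq_apply]; ring
  have h2 : 2 * T - (dilog x).re ≤ ‖dilog x‖ := by
    refine le_trans (le_abs_self _) (abs_le_of_sq_le_sq ?_ (norm_nonneg _))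
    rw [h1]
    nlinarith [pow_le_pow_left₀ hm0 hm 2, mul_nonneg hT (by linarith : 0 ≤ (dilog x).re + R)]
  linarith

lemma fk_sq' (k : ℕ) (x : ℂ) : fk k x ^ 2 = gs (x ^ k) / (k : ℝ) ^ 2 := fk_sq k x

end PartE1


/-! ### Part E2: numerical estimates -/

section PartE2
open Topology

lemma polar_facts (x : ℂ) (hx0 : x ≠ 0) : ∃ c s : ℝ, x.re = ‖x‖ * c ∧ x.im = ‖x‖ * s ∧
    c ^ 2 + s ^ 2 = 1 ∧ 0 < ‖x‖ := by
  have h : 0 < ‖x‖ := norm_pos_iff.mpr hx0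
  refine ⟨x.re / ‖x‖, x.im / ‖x‖, by field_simp, by field_simp, ?_, h⟩
  have h1 : ‖x‖ ^ 2 = x.re ^ 2 + x.im ^ 2 := by
    rw [← Complex.normSq_eq_norm_sq, Complex.normSq_apply]; ring
  field_simp
  linarith

lemma gs_num_pos (x : ℂ) (hx0 : x ≠ 0) (hx : ‖x‖ < 1) (hb : 0 ≤ x.im) (ha : 0 ≤ x.re) :
    0.2632 * ‖x‖ ≤ gs x := by
  obtain ⟨c, s, hc, hs, hcs, hr⟩ := polar_facts x hx0
  have hre := dilog_re_lb x hx
  have hg := gs_re x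
  set r := ‖x‖ with hrd
  have hc0 : 0 ≤ c := by rw [hc] at ha; exact nonneg_of_mul_nonneg_right ha hr
  have hs0 : 0 ≤ s := by rw [hs] at hb; exact nonneg_of_mul_nonneg_right hb hr
  by_cases h : 0.5132 ≤ c
  · nlinarith
  · push Not at h
    have hs1 : 0.858 ≤ s := by nlinarith
    have hs2 : s ≤ 1 := by nlinarith
    have him := dilog_im_lb_pos x hx ha hb
    refine gs_lb x (0.2632 * r) (0.25 * r) (0.7626 * r) (by positivity) (by nlinarith [mul_nonneg hr.le hc0])
      (by positivity) (le_trans ?_ him) ?_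
    · rw [hs]
      have h1 : (r * s) ^ 3 ≤ r * s := by
        have h2 : r * s ≤ 1 := by nlinarith
        have h3 : 0 ≤ r * s := by positivity
        nlinarith [mul_nonneg h3 (by nlinarith : 0 ≤ 1 - (r * s) ^ 2)]
      nlinarith
    · nlinarith [sq_nonneg r]

set_option maxHeartbeats 800000 in
lemma gs_num_neg (x : ℂ) (hx0 : x ≠ 0) (hx : ‖x‖ < 1) (hb : 0 ≤ x.im) (ha : x.re < 0)
    (h : 2 * x.re ^ 2 ≤ ‖x‖ ^ 2) : 0.0658 * ‖x‖ ≤ gs x ∧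
      (x.re ^ 2 ≤ 0.1465 * ‖x‖ ^ 2 → 0.1029 * ‖x‖ ≤ gs x) := by
  obtain ⟨c, s, hc, hs, hcs, hr⟩ := polar_facts x hx0
  have hre := dilog_re_lb_neg x hx ha.le h
  have him := dilog_im_lb_neg x hx ha.le hb
  set r := ‖x‖ with hrd
  have hc0 : c ≤ 0 := by rw [hc] at ha; nlinarith
  have hs0 : 0 ≤ s := by rw [hs] at hb; exact nonneg_of_mul_nonneg_right hb hr
  have hc2 : c ^ 2 ≤ 1 / 2 := by
    rw [hc] at h
    have : 2 * c ^ 2 * r ^ 2 ≤ 1 * r ^ 2 := by nlinarith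
    have := le_of_mul_le_mul_right this (by positivity)
    linarith
  obtain ⟨β, rfl⟩ : ∃ β, c = -β := ⟨-c, by ring⟩
  have hβ0 : 0 ≤ β := by linarith
  have hβ : β ≤ 0.70711 := by nlinarith
  have hs1 : 0.7071 ≤ s := by nlinarith
  have hs2 : s ≤ 1 := by nlinarith
  have hR : -(0.7072 * r) ≤ (dilog x).re := by
    refine le_trans ?_ hre
    rw [hc]
    have h1 : β + (1 - 2 * β ^ 2) / 4 ≤ 0.7072 := by nlinarith
    have h2 : 0 ≤ 1 - 2 * β ^ 2 := by nlinarith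
    have h3 : r * (β + (1 - 2 * β ^ 2) / 4) ≤ r * 0.7072 := mul_le_mul_of_nonneg_left h1 hr.le
    have h4 : r * (r * (1 - 2 * β ^ 2)) ≤ r * (1 * (1 - 2 * β ^ 2)) := by gcongr
    nlinarith
  have hI : r * (s * (0.9327 - 0.2744 * β - (1 - β ^ 2) / 9)) ≤ (dilog x).im := by
    refine le_trans ?_ him
    rw [hc, hs]
    have e1 : r * s * (2 / 1.35 - 1 / 1.35 ^ 2 + r * -β / (2 * 1.35 ^ 2)) - (r * s) ^ 3 / 9
      = r * (s * ((2 / 1.35 - 1 / 1.35 ^ 2 - r * β / (2 * 1.35 ^ 2)) - r ^ 2 * s ^ 2 / 9)) := by ring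
    rw [e1]
    refine mul_le_mul_of_nonneg_left (mul_le_mul_of_nonneg_left ?_ hs0) hr.le
    have h1 : r * β ≤ 1 * β := by gcongr
    have h2 : r ^ 2 * s ^ 2 ≤ 1 * s ^ 2 := by gcongr; nlinarith
    have h3 : s ^ 2 = 1 - β ^ 2 := by linarith
    norm_num
    linarith
  refine ⟨gs_lb x _ (0.7072 * r) (0.48 * r) (by positivity) hR (by positivity) (le_trans ?_ hI) ?_, fun h' =>
    gs_lb x _ (0.7072 * r) (0.66 * r) (by positivity) hR (by positivity) (le_trans ?_ hI) ?_⟩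
  · rw [mul_comm]
    refine mul_le_mul_of_nonneg_left ?_ hr.le
    have : 0.68 ≤ 0.9327 - 0.2744 * β - (1 - β ^ 2) / 9 := by
      nlinarith only [sq_nonneg (β - 0.70711), hβ]
    nlinarith only [this, hs1]
  · nlinarith only [sq_nonneg r]
  · have hc3 : β ^ 2 ≤ 0.1465 := by
      rw [hc] at h'
      have : β ^ 2 * r ^ 2 ≤ 0.1465 * r ^ 2 := by nlinarith
      exact le_of_mul_le_mul_right this (by positivity)
    rw [mul_comm]
    refine mul_le_mul_of_nonneg_left ?_ hr.le
    have h1 : β ≤ 0.383 := by nlinarith only [hc3, hβ0]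
    have h2 : 0.92 ≤ s := by nlinarith only [hc3, hcs, hs0]
    have : 0.72 ≤ 0.9327 - 0.2744 * β - (1 - β ^ 2) / 9 := by
      nlinarith only [sq_nonneg (β - 0.383), h1]
    nlinarith only [this, h2]
  · nlinarith only [sq_nonneg r]

lemma conj_wlog {p : ℂ → Prop} (hp : ∀ x, p ((starRingEnd ℂ) x) → p x) (h : ∀ x : ℂ, 0 ≤ x.im → p x) (x : ℂ) :
    p x := by
  by_cases hx : 0 ≤ x.im
  · exact h x hx
  · apply hp
    apply h
    simp; linarith

lemma gs_num3 (x : ℂ) : x ≠ 0 → ‖x‖ < 1 → 0 ≤ x.re → 0.2632 * ‖x‖ ≤ gs x := by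
  refine conj_wlog (p := fun x => x ≠ 0 → ‖x‖ < 1 → 0 ≤ x.re → 0.2632 * ‖x‖ ≤ gs x) ?_ ?_ x
  · intro x h h1 h2 h3
    have := h (by simpa using h1) (by simpa using h2) (by simpa using h3)
    simpa [gs_conj] using this
  · intro x hb h1 h2 h3
    exact gs_num_pos x h1 h2 hb h3

lemma gs_num1 (x : ℂ) : x ≠ 0 → ‖x‖ < 1 → x.re < 0 → 2 * x.re ^ 2 ≤ ‖x‖ ^ 2 →
    0.0658 * ‖x‖ ≤ gs x ∧ (x.re ^ 2 ≤ 0.1465 * ‖x‖ ^ 2 → 0.1029 * ‖x‖ ≤ gs x) := by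
  refine conj_wlog (p := fun x => x ≠ 0 → ‖x‖ < 1 → x.re < 0 → 2 * x.re ^ 2 ≤ ‖x‖ ^ 2 →
    0.0658 * ‖x‖ ≤ gs x ∧ (x.re ^ 2 ≤ 0.1465 * ‖x‖ ^ 2 → 0.1029 * ‖x‖ ≤ gs x)) ?_ ?_ x
  · intro x h h1 h2 h3 h4
    have := h (by simpa using h1) (by simpa using h2) (by simpa using h3) (by simpa using h4)
    simpa [gs_conj] using this
  · intro x hb h1 h2 h3 h4
    exact gs_num_neg x h1 h2 hb h3 h4

lemma dilog_re_nonpos (x : ℂ) (hx : ‖x‖ < 1) (ha : x.re ≤ 0) : (dilog x).re ≤ 0 := by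
  have := dilog_ray_lb x hx (-1) (fun _ => 0) (fun _ => 0) (fun t => hasDerivAt_const t 0) rfl ?_
  · simp at this; exact this
  · intro t ht
    obtain ⟨h1, h2⟩ := ray_norm hx ht
    rw [neg_one_mul, Complex.neg_re, neg_log_re _ h1, Complex.re_ofReal_mul]
    have h3 : 1 ≤ 1 - 2 * (t * x.re) + ‖(t : ℂ) * x‖ ^ 2 := by
      have := mul_nonneg ht.1.le (neg_nonneg.mpr ha)
      nlinarith [sq_nonneg ‖(t : ℂ) * x‖]
    have := Real.log_nonneg h3
    linarith

lemma dilog_norm_le' (z : ℂ) (hz : ‖z‖ ≤ 1) : ‖dilog z‖ ≤ 1.645 * ‖z‖ := by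
  refine (dilog_norm_le z hz).trans ?_
  have : Real.pi ^ 2 / 6 ≤ 1.645 := by
    have := Real.pi_lt_d4
    have := Real.pi_pos
    nlinarith
  gcongr

lemma fk_lt_of_sq {j k : ℕ} {x : ℂ} (h : fk k x ^ 2 < fk j x ^ 2) : fk k x < fk j x :=
  lt_of_pow_lt_pow_left₀ 2 (fk_nonneg j x) h

set_option maxHeartbeats 1600000 in
/-- For `k ≥ 4` the function `f_k` is dominated by `f_1` or `f_2`. -/
lemma fk_lt_of_four_le (x : ℂ) (hx0 : x ≠ 0) (hx : ‖x‖ < 1) (k : ℕ) (hk : 4 ≤ k) :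
    fk k x < fk 1 x ∨ fk k x < fk 2 x := by
  have hr : 0 < ‖x‖ := norm_pos_iff.mpr hx0
  have hx2 : ‖x ^ 2‖ < 1 := by rw [norm_pow]; exact pow_lt_one₀ hr.le hx two_ne_zero
  have hx20 : x ^ 2 ≠ 0 := pow_ne_zero _ hx0
  have hn2 : ‖x‖ ^ 2 = x.re ^ 2 + x.im ^ 2 := by
    rw [← Complex.normSq_eq_norm_sq, Complex.normSq_apply]; ring
  have hre2 : (x ^ 2).re = x.re ^ 2 - x.im ^ 2 := by rw [sq]; simp [Complex.mul_re]; ring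
  have him2 : (x ^ 2).im = 2 * x.re * x.im := by rw [sq]; simp [Complex.mul_im]; ring
  have hre4 : (x ^ 4).re = 2 * (x ^ 2).re ^ 2 - (‖x‖ ^ 2) ^ 2 := by
    rw [show x ^ 4 = x ^ 2 * x ^ 2 by ring, Complex.mul_re, hn2, hre2, him2]; ring
  have hf1 : fk 1 x ^ 2 = gs x := by rw [fk_sq']; simp
  have hf2 : fk 2 x ^ 2 = gs (x ^ 2) / 4 := by rw [fk_sq']; norm_num
  have hfk : fk k x ^ 2 = gs (x ^ k) / (k : ℝ) ^ 2 := fk_sq' k x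
  have hxk : ‖x ^ k‖ ≤ 1 := by rw [norm_pow]; exact pow_le_one₀ hr.le hx.le
  have hxk1 : ‖x ^ k‖ < 1 := by rw [norm_pow]; exact pow_lt_one₀ hr.le hx (by omega)
  have hdk := dilog_norm_le' (x ^ k) hxk
  rw [norm_pow] at hdk
  have hgk := gs_le (x ^ k)
  have hr2 : ‖x‖ ^ 2 < ‖x‖ := by nlinarith
  have hr4 : ‖x‖ ^ 4 < ‖x‖ ^ 2 := pow_lt_pow_right_of_lt_one₀ hr hx (by norm_num)
  have hgen : fk k x ^ 2 < 0.0658 * ‖x‖ ^ 2 → fk k x < fk 1 x ∨ fk k x < fk 2 x := by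
    intro hlt
    by_cases ha : 0 ≤ x.re
    · left; apply fk_lt_of_sq
      rw [hf1]
      have := gs_num3 x hx0 hx ha
      nlinarith
    · push Not at ha
      by_cases ha2 : 2 * x.re ^ 2 ≤ ‖x‖ ^ 2
      · left; apply fk_lt_of_sq
        rw [hf1]
        have := (gs_num1 x hx0 hx ha ha2).1
        nlinarith
      · right; apply fk_lt_of_sq
        rw [hf2]
        have := gs_num3 (x ^ 2) hx20 hx2 (by rw [hre2]; linarith)
        rw [norm_pow] at this
        linarith
  rcases Nat.lt_or_ge 4 k with h5 | h4
  · apply hgen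
    have hk5 : (5 : ℝ) ≤ k := by exact_mod_cast h5
    have h1 : ‖x‖ ^ k < ‖x‖ ^ 2 := pow_lt_pow_right_of_lt_one₀ hr hx (by omega)
    rw [hfk, div_lt_iff₀ (by positivity)]
    have h2 : (25 : ℝ) ≤ (k : ℝ) ^ 2 := by nlinarith
    have h3 : 0.0658 * ‖x‖ ^ 2 * 25 ≤ 0.0658 * ‖x‖ ^ 2 * (k : ℝ) ^ 2 := by gcongr
    linarith
  · obtain rfl : k = 4 := le_antisymm h4 hk
    by_cases hre : (x ^ 4).re ≤ 0
    · apply hgen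
      have := gs_le_half (x ^ 4) (dilog_re_nonpos _ hxk1 hre)
      rw [hfk, div_lt_iff₀ (by positivity)]
      push_cast
      nlinarith
    · push Not at hre
      rw [hre4] at hre
      have hk4 : fk 4 x ^ 2 < 0.1029 * ‖x‖ ^ 2 := by
        rw [hfk, div_lt_iff₀ (by positivity)]
        push_cast
        nlinarith
      by_cases hp : 0 ≤ (x ^ 2).re
      · right; apply fk_lt_of_sq
        rw [hf2]
        have h1 : 0.707 * ‖x‖ ^ 2 ≤ (x ^ 2).re := by
          refine le_trans (le_abs_self _) (abs_le_of_sq_le_sq ?_ hp)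
          nlinarith
        have h2 := dilog_re_lb (x ^ 2) hx2
        have h3 := gs_re (x ^ 2)
        rw [norm_pow] at h2
        nlinarith
      · push Not at hp
        have h1 : 0.707 * ‖x‖ ^ 2 ≤ -(x ^ 2).re := by
          refine le_trans (le_abs_self _) (abs_le_of_sq_le_sq ?_ (by linarith))
          nlinarith
        left; apply fk_lt_of_sq
        rw [hf1]
        by_cases ha : 0 ≤ x.re
        · have := gs_num3 x hx0 hx ha
          nlinarith
        · push Not at ha
          have := (gs_num1 x hx0 hx ha (by nlinarith)).2 (by nlinarith)
          nlinarith

/-- Real points are never in `R3` except for 0. -/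
lemma real_lt (x : ℂ) (hx0 : x ≠ 0) (hx : ‖x‖ < 1) (him : x.im = 0) (k : ℕ) (hk : k = 1 ∨ k = 2)
    (hpos : k = 1 → 0 ≤ x.re) :
    ‖dilog (x ^ 3)‖ / 9 < (dilog (x ^ k)).re / (k : ℝ) ^ 2 := by
  have hr : 0 < ‖x‖ := norm_pos_iff.mpr hx0
  have hn2 : ‖x‖ ^ 2 = x.re ^ 2 := by
    rw [← Complex.normSq_eq_norm_sq, Complex.normSq_apply, him]; ring
  have hx3 : ‖x ^ 3‖ ≤ 1 := by rw [norm_pow]; exact pow_le_one₀ hr.le hx.le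
  have h3 := dilog_norm_le' (x ^ 3) hx3
  rw [norm_pow] at h3
  have h32 : ‖x‖ ^ 3 < ‖x‖ ^ 2 := pow_lt_pow_right_of_lt_one₀ hr hx (by norm_num)
  have h21 : ‖x‖ ^ 2 < ‖x‖ := by nlinarith
  rcases hk with rfl | rfl
  · have h1 : x.re = ‖x‖ := by
      have := hpos rfl
      rw [← abs_of_nonneg this]
      refine (abs_eq_abs.mpr ?_).trans (abs_of_pos hr)
      exact sq_eq_sq_iff_eq_or_eq_neg.mp hn2.symm
    have := dilog_re_lb x hx
    simp only [pow_one, Nat.cast_one, one_pow, div_one]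
    rw [h1] at this
    nlinarith
  · have hx2 : ‖x ^ 2‖ < 1 := by rw [norm_pow]; exact pow_lt_one₀ hr.le hx two_ne_zero
    have hre2 : (x ^ 2).re = ‖x‖ ^ 2 := by rw [hn2, sq]; simp [Complex.mul_re, him]; ring
    have := dilog_re_lb (x ^ 2) hx2
    rw [hre2, norm_pow] at this
    push_cast
    nlinarith

end PartE2


/-! ### Part E3: the interior of `R3` -/

section PartE3
open Topology

lemma real_notMem_R3 (x : ℂ) (hx0 : x ≠ 0) (him : x.im = 0) : x ∉ R3 := by
  rintro ⟨hx, _, h2⟩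
  have h := real_lt x hx0 hx him 2 (Or.inr rfl) (by norm_num)
  have h3 : fk 3 x ^ 2 < fk 2 x ^ 2 := by
    rw [fk_sq', fk_sq']
    have h4 := gs_le (x ^ 3)
    have h5 := gs_re (x ^ 2)
    push_cast at h ⊢
    calc gs (x ^ 3) / 3 ^ 2 ≤ ‖dilog (x ^ 3)‖ / 9 := by norm_num; linarith
      _ < (dilog (x ^ 2)).re / 2 ^ 2 := h
      _ ≤ _ := by gcongr
  exact absurd (fk_lt_of_sq h3) (not_lt.mpr h2)

lemma interior_im_ne {x : ℂ} (hx : x ∈ interior R3) : x.im ≠ 0 := by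
  intro him
  by_cases h0 : x = 0
  · subst h0
    obtain ⟨ε, hε, hb⟩ := Metric.mem_nhds_iff.mp (mem_interior_iff_mem_nhds.mp hx)
    refine real_notMem_R3 ((ε / 2 : ℝ) : ℂ) ?_ (Complex.ofReal_im _) (hb ?_)
    · exact_mod_cast (by positivity : (ε / 2 : ℝ) ≠ 0)
    · rw [mem_ball_zero_iff, Complex.norm_real, Real.norm_of_nonneg (by positivity)]
      linarith
  · exact real_notMem_R3 x h0 him (interior_subset hx)

lemma slit_of_fk_pos {k : ℕ} {x : ℂ} (h : 0 < fk k x) : dilog (x ^ k) ∈ Complex.slitPlane := by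
  by_contra hc
  rw [Complex.mem_slitPlane_iff] at hc
  push Not at hc
  obtain ⟨h1, h2⟩ := hc
  have h3 : dilog (x ^ k) = ((dilog (x ^ k)).re : ℂ) := by
    apply Complex.ext <;> simp [h2]
  have h4 : ‖dilog (x ^ k)‖ = -(dilog (x ^ k)).re := by
    rw [h3, Complex.norm_real, Real.norm_of_nonpos h1, Complex.ofReal_re]
  have h5 : fk k x ^ 2 = 0 := by
    rw [fk_sq, h4]; simp
  have := pow_eq_zero_iff (two_ne_zero) |>.mp h5
  linarith

lemma dilog_pow_analytic (k : ℕ) (hk : 0 < k) :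
    AnalyticOnNhd ℂ (fun x => dilog (x ^ k)) (Metric.ball 0 1) := by
  intro x hx
  have hx' : ‖x‖ < 1 := by simpa using hx
  refine AnalyticAt.fun_comp (g := dilog) (f := fun x => x ^ k) (dilog_analyticOnNhd _ ?_) (analyticAt_id.pow k)
  simp
  exact pow_lt_one₀ (norm_nonneg _) hx' hk.ne'

lemma csqrt_sq (z : ℂ) : (z ^ (1 / 2 : ℂ)) ^ 2 = z := by
  have h := Complex.cpow_nat_inv_pow z two_ne_zero
  rw [one_div]
  simpa using h

lemma strict_alg (a b κ : ℂ) : (b ^ 2 / 9 - a ^ 2 / κ ^ 2 - (1 / 3 * b - 1 / κ * a) ^ 2) ^ 2 -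
      4 * (1 / 3 * b - 1 / κ * a) ^ 2 * (a ^ 2 / κ ^ 2) = 0 := by
  simp only [div_eq_mul_inv]
  ring

lemma fk_strict {x₀ : ℂ} (hx : x₀ ∈ interior R3) (h3 : 0 < fk 3 x₀) (k : ℕ) (hk : k = 1 ∨ k = 2) :
    fk k x₀ < fk 3 x₀ := by
  have hk0 : 0 < k := by omega
  have hle : ∀ x ∈ R3, fk k x ≤ fk 3 x := by
    rintro x ⟨_, h1, h2⟩
    rcases hk with rfl | rfl
    · exact h1
    · exact h2
  have hx1 := interior_subset hx
  refine lt_of_le_of_ne (hle _ hx1) ?_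
  intro heq
  have hball : x₀ ∈ Metric.ball (0 : ℂ) 1 := by simpa using hx1.1
  have hA := dilog_pow_analytic k hk0
  have hB := dilog_pow_analytic 3 (by norm_num)
  have hsA : dilog (x₀ ^ k) ∈ Complex.slitPlane := slit_of_fk_pos (by rw [heq]; exact h3)
  have hsB : dilog (x₀ ^ 3) ∈ Complex.slitPlane := slit_of_fk_pos h3
  set h : ℂ → ℂ := fun x => ((1 / (3 : ℕ) : ℝ) : ℂ) * dilog (x ^ 3) ^ (1 / 2 : ℂ) -
    ((1 / (k : ℕ) : ℝ) : ℂ) * dilog (x ^ k) ^ (1 / 2 : ℂ) with hh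
  have hre : ∀ x, (h x).re = fk 3 x - fk k x := by
    intro x
    rw [hh]
    simp only [Complex.sub_re, Complex.re_ofReal_mul]
    rfl
  have han : AnalyticAt ℂ h x₀ := by
    refine (analyticAt_const.mul ((hB x₀ hball).cpow analyticAt_const hsB)).sub
      (analyticAt_const.mul ((hA x₀ hball).cpow analyticAt_const hsA))
  have hconst : ∀ᶠ z in 𝓝 x₀, h z = h x₀ := by
    rcases han.eventually_constant_or_nhds_le_map_nhds with h1 | h1
    · exact h1
    · exfalso
      have h2 : {w : ℂ | 0 ≤ w.re} ∈ 𝓝 (h x₀) := by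
        apply h1
        rw [Filter.mem_map]
        filter_upwards [mem_interior_iff_mem_nhds.mp hx] with x hxR
        show 0 ≤ (h x).re
        rw [hre]; linarith [hle x hxR]
      obtain ⟨ε, hε, hb⟩ := Metric.mem_nhds_iff.mp h2
      have h4 : h x₀ - ((ε / 2 : ℝ) : ℂ) ∈ {w : ℂ | 0 ≤ w.re} := by
        apply hb
        rw [Metric.mem_ball, dist_eq_norm, sub_sub_cancel_left, norm_neg, Complex.norm_real,
          Real.norm_of_nonneg (by positivity)]
        linarith
      have h5 : 0 ≤ (h x₀ - ((ε / 2 : ℝ) : ℂ)).re := h4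
      rw [Complex.sub_re, hre, Complex.ofReal_re, heq] at h5
      linarith
  set w := h x₀ with hw
  have hkC : (k : ℂ) ≠ 0 := by exact_mod_cast hk0.ne'
  have hid : Set.EqOn (fun x => (dilog (x ^ 3) / 9 - dilog (x ^ k) / (k : ℂ) ^ 2 - w ^ 2) ^ 2 -
      4 * w ^ 2 * (dilog (x ^ k) / (k : ℂ) ^ 2)) (fun _ => 0) (Metric.ball 0 1) := by
    refine AnalyticOnNhd.eqOn_of_preconnected_of_eventuallyEq (𝕜 := ℂ) ?_ analyticOnNhd_const
      (convex_ball _ _).isPreconnected hball ?_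
    · intro x hxb
      have hA' := (hA x hxb).div (analyticAt_const (v := (k : ℂ) ^ 2)) (pow_ne_zero _ hkC)
      have hB' := (hB x hxb).div (analyticAt_const (v := (9 : ℂ))) (by norm_num)
      exact (((hB'.sub hA').sub analyticAt_const).pow 2).sub (analyticAt_const.mul hA')
    · filter_upwards [hconst] with x hx
      have e3 := strict_alg (dilog (x ^ k) ^ (1 / 2 : ℂ)) (dilog (x ^ 3) ^ (1 / 2 : ℂ)) k
      rw [csqrt_sq, csqrt_sq] at e3
      have e4 : w = 1 / 3 * dilog (x ^ 3) ^ (1 / 2 : ℂ) - 1 / (k : ℂ) * dilog (x ^ k) ^ (1 / 2 : ℂ) := by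
        rw [← hx, hh]; push_cast; rfl
      rw [e4]
      exact e3
  have h0 := hid (by simp : (0 : ℂ) ∈ Metric.ball (0 : ℂ) 1)
  simp [hk0.ne', dilog_zero] at h0
  have hhalf := hid (by rw [mem_ball_zero_iff]; norm_num : (1 / 2 : ℂ) ∈ Metric.ball (0 : ℂ) 1)
  simp only [h0, ne_eq, OfNat.ofNat_ne_zero, not_false_eq_true, zero_pow, mul_zero, zero_mul, sub_zero] at hhalf
  rw [pow_eq_zero_iff two_ne_zero, sub_eq_zero] at hhalf
  have hr := real_lt (1 / 2) (by norm_num) (by norm_num) (by norm_num) k hk (by norm_num)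
  have e1 : (dilog ((1 / 2) ^ k)).re / (k : ℝ) ^ 2 = (dilog ((1 / 2) ^ k) / (k : ℂ) ^ 2).re := by
    rw [show (k : ℂ) ^ 2 = (((k : ℝ) ^ 2 : ℝ) : ℂ) by push_cast; rfl, Complex.div_ofReal_re]
  rw [e1, ← hhalf] at hr
  have e2 := Complex.re_le_norm (dilog ((1 / 2) ^ 3) / 9)
  rw [norm_div] at e2
  norm_num at e2 hr
  linarith

/-- Everything we need about interior points of `R3`. -/
lemma interior_facts {x₀ : ℂ} (hx : x₀ ∈ interior R3) : ‖x₀‖ < 1 ∧ x₀.im ≠ 0 ∧ 0 < fk 3 x₀ ∧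
    ∀ k : ℕ, 0 < k → k ≠ 3 → fk k x₀ < fk 3 x₀ := by
  have hx1 := interior_subset hx
  have him := interior_im_ne hx
  have hx0 : x₀ ≠ 0 := by rintro rfl; simp at him
  have hbig : ∀ k, 4 ≤ k → fk k x₀ < fk 3 x₀ := by
    intro k hk
    rcases fk_lt_of_four_le x₀ hx0 hx1.1 k hk with h | h
    · exact h.trans_le hx1.2.1
    · exact h.trans_le hx1.2.2
  have h3 : 0 < fk 3 x₀ := (fk_nonneg 4 x₀).trans_lt (hbig 4 le_rfl)
  refine ⟨hx1.1, him, h3, ?_⟩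
  intro k hk hk3
  rcases Nat.lt_or_ge k 4 with h | h
  · exact fk_strict hx h3 k (by omega)
  · exact hbig k h

end PartE3


/-! ### Part F1: the window integrals -/

section PartF1
open Topology

/-- `Λ(x) = √(Li₂(x³))/3` -/
noncomputable def Lam (x : ℂ) : ℂ := ((1 / (3 : ℕ) : ℝ) : ℂ) * dilog (x ^ 3) ^ (1 / 2 : ℂ)

lemma Lam_re (x : ℂ) : (Lam x).re = fk 3 x := by
  unfold Lam fk
  rw [Complex.re_ofReal_mul]

lemma Lam_sq (x : ℂ) : Lam x ^ 2 = dilog (x ^ 3) / 9 := by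
  unfold Lam
  rw [mul_pow, csqrt_sq]
  push_cast
  ring

lemma Lam_continuousAt {x : ℂ} (hx : ‖x‖ < 1) (h3 : 0 < fk 3 x) : ContinuousAt Lam x := by
  unfold Lam
  refine continuousAt_const.mul ?_
  refine ContinuousAt.cpow ?_ continuousAt_const (slit_of_fk_pos h3)
  exact (dilog_pow_analytic 3 (by norm_num) x (by simpa using hx)).continuousAt

/-- `n^(1/4)` -/
noncomputable def tau (n : ℕ) : ℝ := Real.sqrt (Real.sqrt n)

lemma tau_sq (n : ℕ) : tau n ^ 2 = Real.sqrt n := Real.sq_sqrt (Real.sqrt_nonneg _)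

lemma tau_four (n : ℕ) : tau n ^ 4 = n := by
  rw [show tau n ^ 4 = (tau n ^ 2) ^ 2 by ring, tau_sq, Real.sq_sqrt (Nat.cast_nonneg _)]

lemma tau_pos {n : ℕ} (hn : 1 ≤ n) : 0 < tau n := by
  unfold tau
  have : (0 : ℝ) < n := by exact_mod_cast hn
  positivity

lemma tau_tendsto : Tendsto tau atTop atTop :=
  Real.tendsto_sqrt_atTop.comp (Real.tendsto_sqrt_atTop.comp tendsto_natCast_atTop_atTop)

/-- the integrand of the Cauchy integral -/
noncomputable def fI (n : ℕ) (x : ℂ) (σ φ : ℝ) : ℂ := cexp (Lg x (σ - φ * I) + n * (σ - φ * I))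

lemma continuous_Lg (x : ℂ) (hx : ‖x‖ < 1) (σ : ℝ) (hσ : 0 < σ) :
    Continuous (fun φ : ℝ => Lg x (σ - φ * I)) := by
  unfold Lg
  refine continuous_tsum (u := fun j : ℕ => ‖x‖ ^ (j + 1) / σ) ?_ ?_ ?_
  · intro j
    refine continuous_const.mul (Continuous.inv₀ (by fun_prop) ?_)
    intro φ h
    have := norm_exp_sub_one_ge (((j : ℂ) + 1) * (σ - φ * I)) 1 (by simp)
    rw [one_mul, h, norm_zero] at this
    have h2 : (((j : ℂ) + 1) * (σ - φ * I)).re = ((j : ℝ) + 1) * σ := by simp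
    rw [h2] at this
    have : 0 < ((j : ℝ) + 1) * σ := by positivity
    linarith
  · refine Summable.div_const ?_ _
    exact (summable_nat_add_iff 1).mpr (summable_geometric_of_lt_one (norm_nonneg _) hx)
  · intro j φ
    have := norm_term_bound x σ φ hσ j
    rw [norm_mul, Complex.norm_real, Real.norm_of_nonneg hσ.le] at this
    rw [le_div_iff₀ hσ, mul_comm]
    exact this

lemma continuous_fI (n : ℕ) (x : ℂ) (hx : ‖x‖ < 1) (σ : ℝ) (hσ : 0 < σ) : Continuous (fI n x σ) := by
  unfold fI
  refine Complex.continuous_exp.comp ((continuous_Lg x hx σ hσ).add (by fun_prop))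

lemma fI_eq (n : ℕ) (hn : 1 ≤ n) (x : ℂ) (φh v : ℝ) (hpos : 0 < (Lam x).re) :
    cexp (-(2 * tau n ^ 2 * Lam x)) * cexp (n * φh * I) *
      fI n x ((Lam x).re / tau n ^ 2) ((tau n ^ 3)⁻¹ * v + (φh - (Lam x).im / tau n ^ 2)) =
    cexp ((Lg x ((Lam x - (v / tau n : ℝ) * I) / (tau n : ℂ) ^ 2 - φh * I) -
        dilog (x ^ 3) / 9 / ((Lam x - (v / tau n : ℝ) * I) / (tau n : ℂ) ^ 2)) -
        v ^ 2 / (Lam x - (v / tau n : ℝ) * I)) := by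
  have hτ := tau_pos hn
  have hτ' : (tau n : ℂ) ≠ 0 := by exact_mod_cast hτ.ne'
  have hnn : (n : ℂ) = (tau n : ℂ) ^ 4 := by exact_mod_cast (tau_four n).symm
  set ζ : ℂ := Lam x - (v / tau n : ℝ) * I with hζ
  have hζ0 : ζ ≠ 0 := by
    intro h
    have : ζ.re = (Lam x).re := by rw [hζ]; simp
    rw [h] at this
    simp at this
    linarith
  have hLam : Lam x = (Lam x).re + (Lam x).im * I := (Complex.re_add_im _).symm
  have hw : (((Lam x).re / tau n ^ 2 : ℝ) : ℂ) -
      (((tau n ^ 3)⁻¹ * v + (φh - (Lam x).im / tau n ^ 2) : ℝ) : ℂ) * I =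
      ζ / (tau n : ℂ) ^ 2 - φh * I := by
    rw [hζ]
    nth_rewrite 3 [hLam]
    push_cast
    field_simp
    ring
  unfold fI
  rw [hw, ← Complex.exp_add, ← Complex.exp_add, ← Lam_sq]
  congr 1
  have hd : (v : ℂ) = (Lam x - ζ) / I * tau n := by
    rw [hζ]
    push_cast
    have := Complex.I_ne_zero
    field_simp
    ring
  rw [hnn, hd]
  have hI : (I : ℂ) ^ 2 = -1 := Complex.I_sq
  have := Complex.I_ne_zero
  rw [mul_pow, div_pow, hI]
  field_simp
  ring

end PartF1


/-! ### Part F2: limit of the window integrals -/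

section PartF2
open Topology

/-- rescaled saddle variable -/
noncomputable def zet (n : ℕ) (x : ℂ) (v : ℝ) : ℂ := Lam x - (v / tau n : ℝ) * I

/-- rescaled window -/
noncomputable def win (B : ℝ) (n : ℕ) (x : ℂ) : Set ℝ :=
  Set.Ioc (tau n * ((Lam x).im - B * (Lam x).re)) (tau n * ((Lam x).im + B * (Lam x).re))

lemma zet_re (n : ℕ) (x : ℂ) (v : ℝ) : (zet n x v).re = (Lam x).re := by
  unfold zet; simp

lemma zet_im (n : ℕ) (x : ℂ) (v : ℝ) : (zet n x v).im = (Lam x).im - v / tau n := by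
  unfold zet
  rw [Complex.sub_im, Complex.im_ofReal_mul, Complex.I_im, mul_one]

lemma win_zet {B : ℝ} {n : ℕ} {x : ℂ} {v : ℝ} (hn : 1 ≤ n) (hv : v ∈ win B n x) :
    |(zet n x v).im| ≤ B * (zet n x v).re := by
  have hτ := tau_pos hn
  rw [zet_re, zet_im, abs_le]
  obtain ⟨h1, h2⟩ := hv
  have h3 : (Lam x).im - B * (Lam x).re ≤ v / tau n := by
    rw [le_div_iff₀ hτ]; linarith
  have h4 : v / tau n ≤ (Lam x).im + B * (Lam x).re := by
    rw [div_le_iff₀ hτ]; linarith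
  constructor <;> linarith

lemma zet_norm {B : ℝ} {n : ℕ} {x : ℂ} {v : ℝ} (hn : 1 ≤ n) (hv : v ∈ win B n x)
    (hpos : 0 < (Lam x).re) : ‖zet n x v‖ ≤ (1 + B) * (Lam x).re := by
  have h1 := win_zet hn hv
  have h2 := Complex.norm_le_abs_re_add_abs_im (zet n x v)
  rw [zet_re] at h1 h2
  rw [abs_of_pos hpos] at h2
  linarith

lemma win_sec {B : ℝ} {n : ℕ} {x : ℂ} {v : ℝ} (hn : 1 ≤ n) (hv : v ∈ win B n x)
    (hpos : 0 < (Lam x).re) : zet n x v / (tau n : ℂ) ^ 2 ∈ Sec B := by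
  have hτ := tau_pos hn
  have h1 := win_zet hn hv
  have e : zet n x v / (tau n : ℂ) ^ 2 = ((((tau n) ^ 2)⁻¹ : ℝ) : ℂ) * zet n x v := by
    push_cast; rw [div_eq_inv_mul]
  have h0 : 0 < (((tau n) ^ 2)⁻¹ : ℝ) := by positivity
  rw [e]
  refine ⟨?_, ?_⟩
  · rw [Complex.re_ofReal_mul, zet_re]; positivity
  · rw [Complex.re_ofReal_mul, Complex.im_ofReal_mul, abs_mul, abs_of_pos h0]
    calc _ ≤ (tau n ^ 2)⁻¹ * (B * (zet n x v).re) := by gcongr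
      _ = _ := by ring

lemma re_inv_lb {ζ : ℂ} {B m : ℝ} (hB : 0 < B) (h1 : 0 < ζ.re) (h2 : ‖ζ‖ ≤ (1 + B) * ζ.re) (h3 : ζ.re ≤ m) (v : ℝ) :
    (1 / ((1 + B) ^ 2 * m)) * v ^ 2 ≤ ((v : ℂ) ^ 2 / ζ).re := by
  have e : (v : ℂ) ^ 2 / ζ = ((v ^ 2 : ℝ) : ℂ) * ζ⁻¹ := by push_cast; rw [div_eq_mul_inv]
  rw [e, Complex.re_ofReal_mul, Complex.inv_re, mul_comm]
  refine mul_le_mul_of_nonneg_left ?_ (sq_nonneg v)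
  have hζ : ζ ≠ 0 := by rintro rfl; simp at h1
  have hn : 0 < Complex.normSq ζ := Complex.normSq_pos.mpr hζ
  have hm : 0 < m := h1.trans_le h3
  rw [div_le_div_iff₀ (by positivity) hn, Complex.normSq_eq_norm_sq, one_mul]
  calc ‖ζ‖ ^ 2 ≤ ((1 + B) * ζ.re) ^ 2 := by gcongr
    _ = ζ.re * ((1 + B) ^ 2 * ζ.re) := by ring
    _ ≤ ζ.re * ((1 + B) ^ 2 * m) := by gcongr

lemma window_lim {x₀ : ℂ} (hx₀ : ‖x₀‖ < 1) (h3 : 0 < fk 3 x₀) (φh : ℝ) (a : ℂ) (ha : a ^ 3 = 1) (ha1 : a ≠ 1)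
    (hφ : cexp (-(φh * I)) = a) (B : ℝ) (hB0 : 0 < B) (hB : |(Lam x₀).im| < B * (Lam x₀).re) :
    Tendsto (fun p : ℕ × ℂ => (tau p.1 : ℂ) ^ 3 * (cexp (-(2 * tau p.1 ^ 2 * Lam p.2)) * cexp (p.1 * φh * I) *
      ∫ φ in (φh - B * ((Lam p.2).re / tau p.1 ^ 2))..(φh + B * ((Lam p.2).re / tau p.1 ^ 2)),
        fI p.1 p.2 ((Lam p.2).re / tau p.1 ^ 2) φ))
      (atTop ×ˢ 𝓝 x₀) (𝓝 (cexp (Ec a x₀) * (Real.pi / (1 / Lam x₀)) ^ (1 / 2 : ℂ))) := by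
  set l : Filter (ℕ × ℂ) := atTop ×ˢ 𝓝 x₀ with hl
  have hx : Tendsto (fun p : ℕ × ℂ => p.2) l (𝓝 x₀) := tendsto_snd
  have hn : ∀ᶠ p : ℕ × ℂ in l, 1 ≤ p.1 := tendsto_fst.eventually (eventually_ge_atTop 1)
  have hτ : Tendsto (fun p : ℕ × ℂ => tau p.1) l atTop := tau_tendsto.comp tendsto_fst
  have hΛ : Tendsto (fun p : ℕ × ℂ => Lam p.2) l (𝓝 (Lam x₀)) := (Lam_continuousAt hx₀ h3).tendsto.comp hx
  have hre : Tendsto (fun p : ℕ × ℂ => (Lam p.2).re) l (𝓝 (Lam x₀).re) :=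
    (Complex.continuous_re.tendsto _).comp hΛ
  have him : Tendsto (fun p : ℕ × ℂ => (Lam p.2).im) l (𝓝 (Lam x₀).im) :=
    (Complex.continuous_im.tendsto _).comp hΛ
  have hlam : 0 < (Lam x₀).re := by rw [Lam_re]; exact h3
  have hpos : ∀ᶠ p : ℕ × ℂ in l, 0 < (Lam p.2).re := hre.eventually (lt_mem_nhds hlam)
  have hle : ∀ᶠ p : ℕ × ℂ in l, (Lam p.2).re ≤ 2 * (Lam x₀).re :=
    hre.eventually (eventually_le_nhds (by linarith))
  have hxn : ∀ᶠ p : ℕ × ℂ in l, ‖p.2‖ < 1 := (hx.norm).eventually (gt_mem_nhds hx₀)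
  have hΛ0 : Lam x₀ ≠ 0 := by intro h; rw [h] at hlam; simp at hlam
  -- the integrand after rescaling
  set G : ℕ × ℂ → ℝ → ℂ := fun p => (win B p.1 p.2).indicator (fun v =>
    cexp (-(2 * tau p.1 ^ 2 * Lam p.2)) * cexp (p.1 * φh * I) *
      fI p.1 p.2 ((Lam p.2).re / tau p.1 ^ 2)
        ((tau p.1 ^ 3)⁻¹ * v + (φh - (Lam p.2).im / tau p.1 ^ 2))) with hG
  have hsec := sector_lim hx₀ a ha ha1 (φh * I) hφ B hB0.le
  have hGform : ∀ p : ℕ × ℂ, 1 ≤ p.1 → 0 < (Lam p.2).re → ∀ v ∈ win B p.1 p.2,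
      G p v = cexp ((Lg p.2 (zet p.1 p.2 v / (tau p.1 : ℂ) ^ 2 - φh * I) -
        dilog (p.2 ^ 3) / 9 / (zet p.1 p.2 v / (tau p.1 : ℂ) ^ 2)) - v ^ 2 / zet p.1 p.2 v) := by
    intro p hp1 hp2 v hv
    rw [hG]
    simp only
    rw [Set.indicator_of_mem hv, fI_eq p.1 hp1 p.2 φh v hp2]
    rfl
  have hintegral : Tendsto (fun p => ∫ v, G p v) l
      (𝓝 (∫ v : ℝ, cexp (Ec a x₀) * cexp (-(1 / Lam x₀) * (v : ℂ) ^ 2))) := by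
    refine MeasureTheory.tendsto_integral_filter_of_dominated_convergence
      (fun v => Real.exp (‖Ec a x₀‖ + 1) * Real.exp (-(1 / ((1 + B) ^ 2 * (2 * (Lam x₀).re))) * v ^ 2))
      ?_ ?_ ?_ ?_
    · filter_upwards [hn, hpos, hxn] with p hp1 hp2 hp3
      refine (Continuous.aestronglyMeasurable ?_).indicator measurableSet_Ioc
      have hσ : 0 < (Lam p.2).re / tau p.1 ^ 2 := div_pos hp2 (pow_pos (tau_pos hp1) 2)
      exact continuous_const.mul ((continuous_fI p.1 p.2 hp3 _ hσ).comp (by fun_prop))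
    · have h1 : ∀ᶠ q : ℂ × ℂ in 𝓝 x₀ ×ˢ 𝓝[Sec B] 0,
          ‖(Lg q.1 (q.2 - φh * I) - dilog (q.1 ^ 3) / 9 / q.2) - Ec a x₀‖ < 1 := by
        have := hsec.eventually (Metric.ball_mem_nhds _ one_pos)
        simpa [dist_eq_norm] using this
      obtain ⟨pa, hpa, pb, hpb, hab⟩ := Filter.eventually_prod_iff.mp h1
      rw [eventually_nhdsWithin_iff, Metric.eventually_nhds_iff] at hpb
      obtain ⟨ε, hε, hpb⟩ := hpb
      have hsmall : ∀ᶠ p : ℕ × ℂ in l, (1 + B) * (2 * (Lam x₀).re) / tau p.1 ^ 2 < ε := by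
        have : Tendsto (fun p : ℕ × ℂ => (1 + B) * (2 * (Lam x₀).re) / tau p.1 ^ 2) l (𝓝 0) :=
          ((tendsto_pow_atTop two_ne_zero).comp hτ).const_div_atTop _
        exact this.eventually (gt_mem_nhds hε)
      filter_upwards [hn, hpos, hxn, hle, hsmall, hx.eventually hpa] with p hp1 hp2 hp3 hp4 hp5 hp6
      refine Filter.Eventually.of_forall fun v => ?_
      by_cases hv : v ∈ win B p.1 p.2
      · have hτp := tau_pos hp1
        have hzn := zet_norm hp1 hv hp2
        rw [hGform p hp1 hp2 v hv, Complex.norm_exp, ← Real.exp_add]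
        apply Real.exp_le_exp.mpr
        rw [Complex.sub_re]
        have hq : ‖zet p.1 p.2 v / (tau p.1 : ℂ) ^ 2‖ < ε := by
          refine lt_of_le_of_lt ?_ hp5
          rw [norm_div, norm_pow, Complex.norm_real, Real.norm_of_nonneg hτp.le]
          gcongr
          refine hzn.trans ?_
          gcongr
        have h2 := hab hp6 (hpb (by simpa using hq) (win_sec hp1 hv hp2))
        simp only at h2
        have h4 := re_inv_lb (m := 2 * (Lam x₀).re) (ζ := zet p.1 p.2 v) hB0 (by rw [zet_re]; exact hp2) (by rw [zet_re]; exact hzn)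
          (by rw [zet_re]; exact hp4) v
        set E := Lg p.2 (zet p.1 p.2 v / (tau p.1 : ℂ) ^ 2 - φh * I) -
          dilog (p.2 ^ 3) / 9 / (zet p.1 p.2 v / (tau p.1 : ℂ) ^ 2)
        have h5 : E.re ≤ ‖Ec a x₀‖ + 1 := by
          have e1 := Complex.re_le_norm E
          have e2 := norm_sub_norm_le E (Ec a x₀)
          linarith
        linarith
      · rw [hG]
        simp only
        rw [Set.indicator_of_notMem hv, norm_zero]
        positivity
    · exact (integrable_exp_neg_mul_sq (by positivity)).const_mul _
    · refine Filter.Eventually.of_forall fun v => ?_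
      have hvw : ∀ᶠ p : ℕ × ℂ in l, v ∈ win B p.1 p.2 := by
        have h1 : Tendsto (fun p : ℕ × ℂ => tau p.1 * ((Lam p.2).im - B * (Lam p.2).re)) l atBot :=
          hτ.atTop_mul_neg (by linarith [(abs_lt.mp hB).2] : (Lam x₀).im - B * (Lam x₀).re < 0)
            (him.sub (hre.const_mul B))
        have h2 : Tendsto (fun p : ℕ × ℂ => tau p.1 * ((Lam p.2).im + B * (Lam p.2).re)) l atTop :=
          hτ.atTop_mul_pos (by linarith [(abs_lt.mp hB).1] : 0 < (Lam x₀).im + B * (Lam x₀).re)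
            (him.add (hre.const_mul B))
        filter_upwards [h1.eventually (eventually_lt_atBot v), h2.eventually (eventually_ge_atTop v)] with p a b
        exact ⟨a, b⟩
      have hz : Tendsto (fun p : ℕ × ℂ => zet p.1 p.2 v) l (𝓝 (Lam x₀)) := by
        unfold zet
        have h1 : Tendsto (fun p : ℕ × ℂ => ((v / tau p.1 : ℝ) : ℂ) * I) l (𝓝 0) := by
          have h2 : Tendsto (fun p : ℕ × ℂ => v / tau p.1) l (𝓝 0) := hτ.const_div_atTop v
          have h3 := ((Complex.continuous_ofReal.tendsto 0).comp h2).mul_const I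
          simpa [Function.comp_def] using h3
        simpa using hΛ.sub h1
      have hw0 : Tendsto (fun p : ℕ × ℂ => zet p.1 p.2 v / (tau p.1 : ℂ) ^ 2) l (𝓝 0) := by
        have h2 : Tendsto (fun p : ℕ × ℂ => (tau p.1 ^ 2)⁻¹) l (𝓝 0) :=
          tendsto_inv_atTop_zero.comp ((tendsto_pow_atTop two_ne_zero).comp hτ)
        have h3 := hz.mul ((Complex.continuous_ofReal.tendsto 0).comp h2)
        simpa [Function.comp_def, div_eq_mul_inv] using h3
      have hw : Tendsto (fun p : ℕ × ℂ => (p.2, zet p.1 p.2 v / (tau p.1 : ℂ) ^ 2)) l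
          (𝓝 x₀ ×ˢ 𝓝[Sec B] 0) := by
        refine hx.prodMk (tendsto_nhdsWithin_iff.mpr ⟨hw0, ?_⟩)
        filter_upwards [hn, hpos, hvw] with p hp1 hp2 hp3
        exact win_sec hp1 hp3 hp2
      have hE := hsec.comp hw
      have hlim := (hE.sub ((tendsto_const_nhds (x := (v : ℂ) ^ 2)).div hz hΛ0)).cexp
      have e : cexp (Ec a x₀ - (v : ℂ) ^ 2 / Lam x₀) = cexp (Ec a x₀) * cexp (-(1 / Lam x₀) * (v : ℂ) ^ 2) := by
        rw [← Complex.exp_add]; congr 1; ring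
      rw [← e]
      refine hlim.congr' ?_
      filter_upwards [hn, hpos, hvw] with p hp1 hp2 hp3
      rw [hGform p hp1 hp2 v hp3]
      rfl
  have hgauss : ∫ v : ℝ, cexp (Ec a x₀) * cexp (-(1 / Lam x₀) * (v : ℂ) ^ 2) =
      cexp (Ec a x₀) * (Real.pi / (1 / Lam x₀)) ^ (1 / 2 : ℂ) := by
    rw [MeasureTheory.integral_const_mul, integral_gaussian_complex]
    rw [one_div, Complex.inv_re]
    exact div_pos hlam (Complex.normSq_pos.mpr hΛ0)
  rw [hgauss] at hintegral
  refine hintegral.congr' ?_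
  filter_upwards [hn, hpos] with p hp1 hp2
  have hτp := tau_pos hp1
  rw [hG]
  simp only
  rw [win, MeasureTheory.integral_indicator measurableSet_Ioc, ← intervalIntegral.integral_of_le (by
    apply mul_le_mul_of_nonneg_left _ hτp.le
    nlinarith [mul_pos hB0 hp2]), intervalIntegral.integral_const_mul,
    intervalIntegral.integral_comp_mul_add _ (by positivity), inv_inv, Complex.real_smul]
  have e1 : (tau p.1 ^ 3)⁻¹ * (tau p.1 * ((Lam p.2).im - B * (Lam p.2).re)) + (φh - (Lam p.2).im / tau p.1 ^ 2)
      = φh - B * ((Lam p.2).re / tau p.1 ^ 2) := by field_simp; ring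
  have e2 : (tau p.1 ^ 3)⁻¹ * (tau p.1 * ((Lam p.2).im + B * (Lam p.2).re)) + (φh - (Lam p.2).im / tau p.1 ^ 2)
      = φh + B * ((Lam p.2).re / tau p.1 ^ 2) := by field_simp; ring
  rw [e1, e2]
  push_cast
  ring

end PartF2


/-! ### Part G: assembly -/

section PartG
open Topology

lemma rest_bound (f : ℝ → ℂ) (hf : Continuous f) (δ C : ℝ) (hδ0 : 0 < δ) (hδ : δ < Real.pi / 3) (hC : 0 ≤ C)
    (h : ∀ φ ∈ Set.Icc (-Real.pi) Real.pi, δ ≤ |φ - 2 * Real.pi / 3| → δ ≤ |φ + 2 * Real.pi / 3| → ‖f φ‖ ≤ C) :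
    ‖(∫ φ in (-Real.pi)..Real.pi, f φ) - (∫ φ in (2 * Real.pi / 3 - δ)..(2 * Real.pi / 3 + δ), f φ)
      - (∫ φ in (-(2 * Real.pi / 3) - δ)..(-(2 * Real.pi / 3) + δ), f φ)‖ ≤ 6 * Real.pi * C := by
  have hi : ∀ a b, IntervalIntegrable f MeasureTheory.volume a b := fun a b => hf.intervalIntegrable a b
  have hπ := Real.pi_pos
  have key : ∀ a b : ℝ, -Real.pi ≤ a → a ≤ b → b ≤ Real.pi →
      (∀ φ, a < φ → φ ≤ b → δ ≤ |φ - 2 * Real.pi / 3| ∧ δ ≤ |φ + 2 * Real.pi / 3|) →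
      ‖∫ φ in a..b, f φ‖ ≤ 2 * Real.pi * C := by
    intro a b ha hab hb hh
    have := intervalIntegral.norm_integral_le_of_norm_le_const (a := a) (b := b) (f := f) (C := C) (by
      intro φ hφ
      rw [Set.uIoc_of_le hab] at hφ
      obtain ⟨h1, h2⟩ := hh φ hφ.1 hφ.2
      exact h φ ⟨by linarith [hφ.1], by linarith [hφ.2]⟩ h1 h2)
    rw [abs_of_nonneg (by linarith)] at this
    nlinarith
  have h1 := key (-Real.pi) (-(2 * Real.pi / 3) - δ) le_rfl (by linarith) (by linarith) (by
    intro φ _ _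
    constructor <;> rw [le_abs] <;> right <;> linarith)
  have h2 := key (-(2 * Real.pi / 3) + δ) (2 * Real.pi / 3 - δ) (by linarith) (by linarith) (by linarith) (by
    intro φ _ _
    constructor <;> rw [le_abs]
    · right; linarith
    · left; linarith)
  have h3 := key (2 * Real.pi / 3 + δ) Real.pi (by linarith) (by linarith) le_rfl (by
    intro φ _ _
    constructor <;> rw [le_abs] <;> left <;> linarith)
  have e1 := intervalIntegral.integral_add_adjacent_intervals (hi (-Real.pi) (-(2 * Real.pi / 3) - δ))
    (hi (-(2 * Real.pi / 3) - δ) (-(2 * Real.pi / 3) + δ))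
  have e2 := intervalIntegral.integral_add_adjacent_intervals (hi (-Real.pi) (-(2 * Real.pi / 3) + δ))
    (hi (-(2 * Real.pi / 3) + δ) (2 * Real.pi / 3 - δ))
  have e3 := intervalIntegral.integral_add_adjacent_intervals (hi (-Real.pi) (2 * Real.pi / 3 - δ))
    (hi (2 * Real.pi / 3 - δ) (2 * Real.pi / 3 + δ))
  have e4 := intervalIntegral.integral_add_adjacent_intervals (hi (-Real.pi) (2 * Real.pi / 3 + δ))
    (hi (2 * Real.pi / 3 + δ) Real.pi)
  have e : (∫ φ in (-Real.pi)..Real.pi, f φ) - (∫ φ in (2 * Real.pi / 3 - δ)..(2 * Real.pi / 3 + δ), f φ)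
      - (∫ φ in (-(2 * Real.pi / 3) - δ)..(-(2 * Real.pi / 3) + δ), f φ) =
      (∫ φ in (-Real.pi)..(-(2 * Real.pi / 3) - δ), f φ) +
      (∫ φ in (-(2 * Real.pi / 3) + δ)..(2 * Real.pi / 3 - δ), f φ) +
      (∫ φ in (2 * Real.pi / 3 + δ)..Real.pi, f φ) := by
    rw [← e4, ← e3, ← e2, ← e1]; ring
  rw [e]
  refine (norm_add₃_le).trans ?_
  linarith

lemma cube_root_facts : (cexp (-(((2 * Real.pi / 3 : ℝ) : ℂ) * I))) ^ 3 = 1 ∧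
    cexp (-(((2 * Real.pi / 3 : ℝ) : ℂ) * I)) ≠ 1 := by
  constructor
  · rw [← Complex.exp_nat_mul, Complex.exp_eq_one_iff]
    exact ⟨-1, by push_cast; ring⟩
  · intro h
    rw [Complex.exp_eq_one_iff] at h
    obtain ⟨n, hn⟩ := h
    have h1 : ((2 * Real.pi * I : ℂ)) * (3 * (n : ℂ) + 1) = 0 := by
      push_cast at hn
      linear_combination (-3 : ℂ) * hn
    have h2 : (3 * (n : ℂ) + 1) = 0 := by
      rcases mul_eq_zero.mp h1 with h | h
      · exact absurd h Complex.two_pi_I_ne_zero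
      · exact h
    have h3 : (3 * n + 1 : ℤ) = 0 := by exact_mod_cast h2
    omega

lemma scaled_bounds {x₀ : ℂ} (hx : x₀ ∈ interior R3) : ∃ c C : ℝ, 0 < c ∧ ∀ᶠ p : ℕ × ℂ in atTop ×ˢ 𝓝 x₀,
    c ≤ ‖(tau p.1 : ℂ) ^ 3 * (cexp (-(2 * tau p.1 ^ 2 * Lam p.2)) * ((2 * Real.pi) * F p.1 p.2))‖ ∧
    ‖(tau p.1 : ℂ) ^ 3 * (cexp (-(2 * tau p.1 ^ 2 * Lam p.2)) * ((2 * Real.pi) * F p.1 p.2))‖ ≤ C := by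
  obtain ⟨hx₀, him, h3, hk⟩ := interior_facts hx
  have hlam : 0 < (Lam x₀).re := by rw [Lam_re]; exact h3
  have hΛ0 : Lam x₀ ≠ 0 := by intro h; rw [h] at hlam; simp at hlam
  obtain ⟨B, hB0, hB, hBM⟩ : ∃ B : ℝ, 0 < B ∧ |(Lam x₀).im| < B * (Lam x₀).re ∧
      ‖dilog (x₀ ^ 3)‖ / 9 / B < fk 3 x₀ ^ 2 := by
    have t1 : ∀ᶠ B : ℝ in atTop, |(Lam x₀).im| < B * (Lam x₀).re :=
      (tendsto_id.atTop_mul_const hlam).eventually_gt_atTop _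
    have t2 : ∀ᶠ B : ℝ in atTop, ‖dilog (x₀ ^ 3)‖ / 9 / B < fk 3 x₀ ^ 2 :=
      (tendsto_id.const_div_atTop _).eventually (gt_mem_nhds (pow_pos h3 2))
    obtain ⟨B, h⟩ := ((eventually_gt_atTop 0).and (t1.and t2)).exists
    exact ⟨B, h.1, h.2.1, h.2.2⟩
  obtain ⟨M, hM, hgap⟩ := gap_global hx₀ B hB0 h3 hk hBM
  obtain ⟨ha, ha1⟩ := cube_root_facts
  set a := cexp (-(((2 * Real.pi / 3 : ℝ) : ℂ) * I)) with hadef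
  have hφ' : cexp (-(((-(2 * Real.pi / 3) : ℝ) : ℂ) * I)) = a⁻¹ := by
    rw [hadef, ← Complex.exp_neg]; congr 1; push_cast; ring
  have hW1 := window_lim hx₀ h3 (2 * Real.pi / 3) a ha ha1 hadef.symm B hB0 hB
  have hW2 := window_lim hx₀ h3 (-(2 * Real.pi / 3)) a⁻¹ (by rw [inv_pow, ha, inv_one])
    (by intro h; exact ha1 (inv_eq_one.mp h)) hφ' B hB0 hB
  set l : Filter (ℕ × ℂ) := atTop ×ˢ 𝓝 x₀ with hl
  have hfst : Tendsto (fun p : ℕ × ℂ => p.1) l atTop := tendsto_fst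
  have hsnd : Tendsto (fun p : ℕ × ℂ => p.2) l (𝓝 x₀) := tendsto_snd
  have hτ : Tendsto (fun p : ℕ × ℂ => tau p.1) l atTop := tau_tendsto.comp hfst
  have hτ2 : Tendsto (fun p : ℕ × ℂ => tau p.1 ^ 2) l atTop := (tendsto_pow_atTop two_ne_zero).comp hτ
  have hre : Tendsto (fun p : ℕ × ℂ => (Lam p.2).re) l (𝓝 (Lam x₀).re) :=
    (Complex.continuous_re.tendsto _).comp ((Lam_continuousAt hx₀ h3).tendsto.comp hsnd)
  have hpos : ∀ᶠ p : ℕ × ℂ in l, 0 < (Lam p.2).re := hre.eventually (lt_mem_nhds hlam)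
  have hn : ∀ᶠ p : ℕ × ℂ in l, 1 ≤ p.1 := hfst.eventually (eventually_ge_atTop 1)
  have hxn : ∀ᶠ p : ℕ × ℂ in l, ‖p.2‖ < 1 := (hsnd.norm).eventually (gt_mem_nhds hx₀)
  have hσ0 : Tendsto (fun p : ℕ × ℂ => (Lam p.2).re / tau p.1 ^ 2) l (𝓝 0) := hre.div_atTop hτ2
  have hσ : Tendsto (fun p : ℕ × ℂ => ((Lam p.2).re / tau p.1 ^ 2, p.2)) l (𝓝[>] 0 ×ˢ 𝓝 x₀) := by
    refine (tendsto_nhdsWithin_iff.mpr ⟨hσ0, ?_⟩).prodMk hsnd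
    filter_upwards [hn, hpos] with p hp1 hp2
    exact div_pos hp2 (pow_pos (tau_pos hp1) 2)
  have hgap' := hσ.eventually hgap
  have hδ : ∀ᶠ p : ℕ × ℂ in l, B * ((Lam p.2).re / tau p.1 ^ 2) < Real.pi / 3 := by
    have := hσ0.const_mul B
    rw [mul_zero] at this
    exact this.eventually (gt_mem_nhds (by positivity))
  -- exponential gap
  obtain ⟨η, hη, hηe⟩ : ∃ η : ℝ, 0 < η ∧ ∀ᶠ p : ℕ × ℂ in l, M / (Lam p.2).re - (Lam p.2).re < -η := by
    have h1 : Tendsto (fun p : ℕ × ℂ => M / (Lam p.2).re - (Lam p.2).re) l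
        (𝓝 (M / (Lam x₀).re - (Lam x₀).re)) := ((tendsto_const_nhds (x := M)).div hre hlam.ne').sub hre
    have h2 : M / (Lam x₀).re - (Lam x₀).re < 0 := by
      rw [sub_neg, div_lt_iff₀ hlam, Lam_re, ← sq]; exact hM
    exact ⟨-(M / (Lam x₀).re - (Lam x₀).re) / 2, by linarith, h1.eventually (gt_mem_nhds (by linarith))⟩
  have hdec : Tendsto (fun p : ℕ × ℂ => 6 * Real.pi * (tau p.1 ^ 3 * Real.exp (-η * tau p.1 ^ 2))) l (𝓝 0) := by
    have h1 : Tendsto (fun t : ℝ => t ^ (3 : ℝ) * Real.exp (-η * t ^ 2)) atTop (𝓝 0) := by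
      have := rpow_mul_exp_neg_mul_sq_isLittleO_exp_neg hη 3
      refine this.trans_tendsto ?_
      refine Real.tendsto_exp_atBot.comp ?_
      exact tendsto_id.const_mul_atTop_of_neg (by norm_num)
    have h2 := (h1.comp hτ).const_mul (6 * Real.pi)
    simpa [Function.comp_def] using h2
  set c₀ : ℂ := ((Real.pi : ℂ) / (1 / Lam x₀)) ^ (1 / 2 : ℂ) with hc₀
  have hc0 : c₀ ≠ 0 := by
    rw [hc₀, Ne, Complex.cpow_eq_zero_iff]
    have : (Real.pi : ℂ) ≠ 0 := by exact_mod_cast Real.pi_ne_zero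
    simp [this, hΛ0]
  set g₁ := cexp (Ec a x₀) * c₀ with hg1
  set g₂ := cexp (Ec a⁻¹ x₀) * c₀ with hg2
  have hne : ‖g₁‖ ≠ ‖g₂‖ := by
    rw [hg1, hg2, norm_mul, norm_mul, Complex.norm_exp, Complex.norm_exp]
    intro h
    have := mul_right_cancel₀ (norm_ne_zero_iff.mpr hc0) h
    exact Ec_ne hx₀ him ha ha1 (Real.exp_injective this)
  set d := |‖g₁‖ - ‖g₂‖| with hd
  have hd0 : 0 < d := abs_pos.mpr (sub_ne_zero.mpr hne)
  have hW1n := hW1.norm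
  have hW2n := hW2.norm
  refine ⟨d / 4, ‖g₁‖ + ‖g₂‖ + d, by positivity, ?_⟩
  filter_upwards [hn, hpos, hxn, hgap', hδ, hηe, hdec.eventually (gt_mem_nhds (show (0 : ℝ) < d / 4 by positivity)),
    hW1n.eventually (Metric.ball_mem_nhds _ (show (0 : ℝ) < d / 8 by positivity)),
    hW2n.eventually (Metric.ball_mem_nhds _ (show (0 : ℝ) < d / 8 by positivity))]
    with p hp1 hp2 hp3 hp4 hp5 hp6 hp7 hp8 hp9
  have hτp := tau_pos hp1
  have hτsq : 0 < tau p.1 ^ 2 := pow_pos hτp 2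
  have hσp : 0 < (Lam p.2).re / tau p.1 ^ 2 := div_pos hp2 hτsq
  set σ := (Lam p.2).re / tau p.1 ^ 2 with hσdef
  rw [F_eq_integral p.1 hp1 p.2 hp3 σ hσp]
  change d / 4 ≤ ‖(tau p.1 : ℂ) ^ 3 * (cexp (-(2 * tau p.1 ^ 2 * Lam p.2)) *
    ∫ φ in (-Real.pi)..Real.pi, fI p.1 p.2 σ φ)‖ ∧ ‖(tau p.1 : ℂ) ^ 3 * (cexp (-(2 * tau p.1 ^ 2 * Lam p.2)) *
    ∫ φ in (-Real.pi)..Real.pi, fI p.1 p.2 σ φ)‖ ≤ ‖g₁‖ + ‖g₂‖ + d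
  have hrest := rest_bound (fI p.1 p.2 σ) (continuous_fI p.1 p.2 hp3 σ hσp) (B * σ)
    (Real.exp (M / σ + p.1 * σ)) (mul_pos hB0 hσp) hp5 (Real.exp_pos _).le (by
      intro φ hφ h1 h2
      have h := hp4 φ hφ h1 h2
      rw [Complex.re_ofReal_mul] at h
      unfold fI
      rw [Complex.norm_exp]
      apply Real.exp_le_exp.mpr
      rw [Complex.add_re]
      have e1 : ((p.1 : ℂ) * (σ - φ * I)).re = p.1 * σ := by simp
      rw [e1]
      have : (Lg p.2 (σ - φ * I)).re ≤ M / σ := by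
        rw [le_div_iff₀ hσp, mul_comm]; exact h.le
      linarith)
  set T := ∫ φ in (-Real.pi)..Real.pi, fI p.1 p.2 σ φ
  set w₁ := ∫ φ in (2 * Real.pi / 3 - B * σ)..(2 * Real.pi / 3 + B * σ), fI p.1 p.2 σ φ
  set w₂ := ∫ φ in (-(2 * Real.pi / 3) - B * σ)..(-(2 * Real.pi / 3) + B * σ), fI p.1 p.2 σ φ
  have hA : ‖(tau p.1 : ℂ) ^ 3 * (cexp (-(2 * tau p.1 ^ 2 * Lam p.2)) * (T - w₁ - w₂))‖ < d / 4 := by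
    refine lt_of_le_of_lt ?_ hp7
    rw [norm_mul, norm_mul, norm_pow, Complex.norm_real, Real.norm_of_nonneg hτp.le, Complex.norm_exp]
    have e1 : (-(2 * (tau p.1 : ℂ) ^ 2 * Lam p.2)).re = -(2 * tau p.1 ^ 2 * (Lam p.2).re) := by
      have : -(2 * (tau p.1 : ℂ) ^ 2 * Lam p.2) = ((-(2 * tau p.1 ^ 2) : ℝ) : ℂ) * Lam p.2 := by
        push_cast; ring
      rw [this, Complex.re_ofReal_mul]; ring
    rw [e1]
    have e2 : M / σ + p.1 * σ = tau p.1 ^ 2 * (M / (Lam p.2).re - (Lam p.2).re) +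
        2 * tau p.1 ^ 2 * (Lam p.2).re := by
      rw [← tau_four p.1, hσdef]
      field_simp
      ring
    calc tau p.1 ^ 3 * (Real.exp (-(2 * tau p.1 ^ 2 * (Lam p.2).re)) * ‖T - w₁ - w₂‖)
        ≤ tau p.1 ^ 3 * (Real.exp (-(2 * tau p.1 ^ 2 * (Lam p.2).re)) *
          (6 * Real.pi * Real.exp (M / σ + p.1 * σ))) := by gcongr
      _ = 6 * Real.pi * (tau p.1 ^ 3 * Real.exp (tau p.1 ^ 2 * (M / (Lam p.2).re - (Lam p.2).re))) := by
        rw [e2, Real.exp_add, Real.exp_neg]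
        have := Real.exp_pos (2 * tau p.1 ^ 2 * (Lam p.2).re)
        field_simp
      _ ≤ 6 * Real.pi * (tau p.1 ^ 3 * Real.exp (-η * tau p.1 ^ 2)) := by
        have := Real.pi_pos
        have h' : Real.exp (tau p.1 ^ 2 * (M / (Lam p.2).re - (Lam p.2).re)) ≤ Real.exp (-η * tau p.1 ^ 2) := by
          apply Real.exp_le_exp.mpr
          nlinarith
        gcongr
  have hw : ∀ (ψ : ℝ) (w : ℂ), ‖(tau p.1 : ℂ) ^ 3 * (cexp (-(2 * tau p.1 ^ 2 * Lam p.2)) * w)‖ =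
      ‖(tau p.1 : ℂ) ^ 3 * (cexp (-(2 * tau p.1 ^ 2 * Lam p.2)) * cexp (p.1 * ψ * I) * w)‖ := by
    intro ψ w
    have : ‖cexp (p.1 * ψ * I)‖ = 1 := by
      have := Complex.norm_exp_ofReal_mul_I (p.1 * ψ)
      push_cast at this
      exact this
    simp only [norm_mul, this, mul_one]
  have h1 := hw (2 * Real.pi / 3) w₁
  have h2 := hw (-(2 * Real.pi / 3)) w₂
  rw [Real.dist_eq, abs_lt] at hp8 hp9
  rw [← h1] at hp8
  rw [← h2] at hp9
  set X := (tau p.1 : ℂ) ^ 3 * (cexp (-(2 * tau p.1 ^ 2 * Lam p.2)) * w₁)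
  set Y := (tau p.1 : ℂ) ^ 3 * (cexp (-(2 * tau p.1 ^ 2 * Lam p.2)) * w₂)
  set Z := (tau p.1 : ℂ) ^ 3 * (cexp (-(2 * tau p.1 ^ 2 * Lam p.2)) * (T - w₁ - w₂)) with hZ
  have eS : (tau p.1 : ℂ) ^ 3 * (cexp (-(2 * tau p.1 ^ 2 * Lam p.2)) * T) = X + Y + Z := by
    rw [hZ]; ring
  rw [eS]
  have u1 : ‖X + Y + Z‖ ≤ ‖X‖ + ‖Y‖ + ‖Z‖ := norm_add₃_le
  have u2 : ‖X‖ ≤ ‖X + Y + Z‖ + ‖Y‖ + ‖Z‖ := by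
    have := norm_sub_le (X + Y + Z - Y) Z
    have h' := norm_sub_le (X + Y + Z) Y
    rw [show X + Y + Z - Y - Z = X by ring] at this
    linarith
  have u3 : ‖Y‖ ≤ ‖X + Y + Z‖ + ‖X‖ + ‖Z‖ := by
    have := norm_sub_le (X + Y + Z - X) Z
    have h' := norm_sub_le (X + Y + Z) X
    rw [show X + Y + Z - X - Z = Y by ring] at this
    linarith
  constructor
  · rcases abs_choice (‖g₁‖ - ‖g₂‖) with hc | hc <;> rw [← hd] at hc <;> linarith [hp8.1, hp8.2, hp9.1, hp9.2]
  · linarith [hp8.1, hp8.2, hp9.1, hp9.2]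

lemma local_lim {x₀ : ℂ} (hx : x₀ ∈ interior R3) :
    Tendsto (fun p : ℕ × ℂ => Real.log ‖F p.1 p.2‖ / (2 * Real.sqrt p.1) - fk 3 p.2) (atTop ×ˢ 𝓝 x₀) (𝓝 0) := by
  obtain ⟨c, C, hc, hS⟩ := scaled_bounds hx
  set l : Filter (ℕ × ℂ) := atTop ×ˢ 𝓝 x₀ with hl
  have hfst : Tendsto (fun p : ℕ × ℂ => p.1) l atTop := tendsto_fst
  have hτ : Tendsto (fun p : ℕ × ℂ => tau p.1) l atTop := tau_tendsto.comp hfst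
  have hn : ∀ᶠ p : ℕ × ℂ in l, 1 ≤ p.1 := hfst.eventually (eventually_ge_atTop 1)
  have hlo : ∀ K : ℝ, Tendsto (fun p : ℕ × ℂ => (K - 3 * Real.log (tau p.1)) / (2 * tau p.1 ^ 2)) l (𝓝 0) := by
    intro K
    have h0 : Tendsto (fun t : ℝ => t ^ 2) atTop atTop := tendsto_pow_atTop two_ne_zero
    have h1 : Tendsto (fun t : ℝ => K / 2 / t ^ 2) atTop (𝓝 0) := h0.const_div_atTop _
    have h2 : Tendsto (fun t : ℝ => Real.log t / t ^ 2) atTop (𝓝 0) := by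
      have := (isLittleO_log_rpow_atTop (show (0 : ℝ) < 2 by norm_num)).tendsto_div_nhds_zero
      simpa using this
    have h3 := (h1.sub (h2.const_mul (3 / 2))).comp hτ
    simp only [mul_zero, sub_zero] at h3
    refine h3.congr fun p => ?_
    simp only [Function.comp_def]
    ring
  refine tendsto_of_tendsto_of_tendsto_of_le_of_le' (hlo (Real.log c - Real.log (2 * Real.pi)))
    (hlo (Real.log C - Real.log (2 * Real.pi))) ?_ ?_
  all_goals
    filter_upwards [hn, hS] with p hp1 hp2
    obtain ⟨ha, hb⟩ := hp2
    have hτp := tau_pos hp1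
    set S := (tau p.1 : ℂ) ^ 3 * (cexp (-(2 * tau p.1 ^ 2 * Lam p.2)) * ((2 * Real.pi) * F p.1 p.2)) with hSdef
    have hSpos : 0 < ‖S‖ := lt_of_lt_of_le hc ha
    have hF : ‖F p.1 p.2‖ ≠ 0 := by
      intro h
      rw [norm_eq_zero] at h
      rw [hSdef, h] at hSpos
      simp at hSpos
    have e1 : (-(2 * (tau p.1 : ℂ) ^ 2 * Lam p.2)).re = -(2 * tau p.1 ^ 2 * fk 3 p.2) := by
      have : -(2 * (tau p.1 : ℂ) ^ 2 * Lam p.2) = ((-(2 * tau p.1 ^ 2) : ℝ) : ℂ) * Lam p.2 := by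
        push_cast; ring
      rw [this, Complex.re_ofReal_mul, Lam_re]; ring
    have hπ := Real.pi_pos
    have hnS : ‖S‖ = tau p.1 ^ 3 * (Real.exp (-(2 * tau p.1 ^ 2 * fk 3 p.2)) * ((2 * Real.pi) * ‖F p.1 p.2‖)) := by
      rw [hSdef, norm_mul, norm_mul, norm_mul, norm_pow, Complex.norm_real, Real.norm_of_nonneg hτp.le,
        Complex.norm_exp, e1]
      congr 3
      simp [abs_of_pos hπ]
    have hlog : Real.log ‖S‖ = 3 * Real.log (tau p.1) + (-(2 * tau p.1 ^ 2 * fk 3 p.2) +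
        (Real.log (2 * Real.pi) + Real.log ‖F p.1 p.2‖)) := by
      rw [hnS, Real.log_mul (by positivity) (by positivity), Real.log_mul (by positivity) (by positivity),
        Real.log_mul (by positivity) hF, Real.log_exp, Real.log_pow]
      norm_num
    have e : Real.log ‖F p.1 p.2‖ / (2 * Real.sqrt p.1) - fk 3 p.2 =
        (Real.log ‖S‖ - Real.log (2 * Real.pi) - 3 * Real.log (tau p.1)) / (2 * tau p.1 ^ 2) := by
      rw [hlog, ← tau_sq]
      field_simp
      ring
    rw [e]
    gcongr

end PartG


/-- On region R(3): uniformly on compact subsets of the interior of R(3),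
ln|Fₙ(z)|/(2√n) → (1/3)·Re √(Li₂(z^3)). -/
theorem sqrt_n_asymptotics_region_3 (K : Set ℂ) (hK : K ⊆ interior R3) (hKc : IsCompact K) :
    TendstoUniformlyOn (fun (n : ℕ) (z : ℂ) => Real.log ‖F n z‖ / (2 * Real.sqrt n))
      (fun z : ℂ => (1 / (3 : ℝ)) * ((dilog (z ^ 3)) ^ (1 / 2 : ℂ)).re) atTop K := by
  rw [← tendstoLocallyUniformlyOn_iff_tendstoUniformlyOn_of_compact hKc,
    Metric.tendstoLocallyUniformlyOn_iff]
  intro ε hε x hx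
  have h := (local_lim (hK hx)).eventually (Metric.ball_mem_nhds _ hε)
  obtain ⟨pa, hpa, pb, hpb, hab⟩ := Filter.eventually_prod_iff.mp h
  refine ⟨{y | pb y}, mem_nhdsWithin_of_mem_nhds hpb, ?_⟩
  filter_upwards [hpa] with n hn y hy
  have := hab hn hy
  simp only [Metric.mem_ball, dist_zero_right, Real.norm_eq_abs] at this
  rw [dist_comm, Real.dist_eq]
  simpa [fk] using this
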